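/- Let k ≥ 1 and let F(X) = ∏_{i=1}^k (a_i X + b_i) with a_i nonzero integers and b_i integers, such that F is admissible and Δ(F) ≠ 0. For every integer r ≥ 1 there exist a constant c(F,r) > 0 and N_0(F,r) such that the following holds for all N ≥ N_0(F,r). Set z = (log N)/3 and M = ∏_{p ≤ z, p prime} p; let A ⊆ S_F(N, N^{1/(4k+1)}), let b ∈ {0,…,M−1}, let A_b = {n ∈ ℕ : b + nM ∈ A}, let G(X) = F(b + MX), and let S ⊂ ℚ be the set of rational roots of G. If h_1, …, h_r are distinct integers with |h_i| ≤ N^{100} for all i and h_i − h_j ∉ (S − S) ∩ ℤ for all i ≠ j, then |(A_b + h_1) ∩ ⋯ ∩ (A_b + h_r)| ≤ c(F,r)·(log z)^{kr}·(log N)^{−kr}·N/M. In particular the constant c(F,r) does not depend on the h_i or on b. -/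

import Mathlib

/-- The primorial of a real number `z`: the product of all primes `p ≤ z`. -/
noncomputable def primor (z : ℝ) : ℕ :=
  ∏ p ∈ (Finset.range (⌊z⌋₊ + 1)).filter Nat.Prime, p

/-- `S_F(N, z)`: the set of natural numbers `n ≤ N` with `gcd(F(n), P(z)) = 1`. -/
noncomputable def SFset (F : ℤ → ℤ) (N : ℕ) (z : ℝ) : Finset ℕ :=
  (Finset.Icc 1 N).filter (fun n => Int.gcd (F n) (primor z) = 1)

/-- `A_b = {n : b + nM ∈ A}` (automatically contained in `[0, N]`). -/
def Abset (A : Finset ℕ) (N M b : ℕ) : Finset ℕ :=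
  (Finset.range (N + 1)).filter (fun n => b + n * M ∈ A)

/-!
Writing a point of the intersection as `n + h i₀`, the task is to count the `n ≤ N / M` for which
`∏ i, F (b + (n + h i₀ - h i) M)` has no prime factor up to a fixed power of `N`. This is a product
of `κ = k r` linear forms in `n`, and the condition on the `h i` says that no two of them are
proportional, so that its discriminant `D` is nonzero; moreover `log D = O(log N)`. A prime
`p ∤ D` has exactly `κ` forbidden residue classes, and Selberg's sieve, applied to the primes
`z < p ≤ w` with `p ∤ D` where `w` is a small power of `N`, bounds the count by a constant times
`(N / M) exp (-κ ∑ 1 / p)`; the Selberg mass is bounded below by Rankin's trick. By Mertens' theorem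
the sum of `1 / p` over `z < p ≤ w` is `log (log w / log z) + O(1)`, and the primes dividing `D`
account for at most `log D / (z log z) = O(1)` of it because `z = (log N) / 3`.
-/

section Mertens

theorem prod_primesLE_pow_div_dvd_factorial (n : ℕ) :
    ∏ p ∈ Nat.primesLE n, p ^ (n / p) ∣ n.factorial := by
  refine Finset.prod_dvd_of_isRelPrime (fun p hp q hq hpq ↦ ?_) fun p hp ↦ ?_
  · have hpq' : p.Coprime q :=
      (Nat.coprime_primes (Nat.prime_of_mem_primesLE hp) (Nat.prime_of_mem_primesLE hq)).2 hpq
    exact Nat.coprime_iff_isRelPrime.1 (hpq'.pow _ _)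
  · obtain ⟨hpn, hprime⟩ := Nat.mem_primesLE.1 hp
    have hone : 1 ∈ Finset.Ico 1 (Nat.log p n + 1) := by
      have := Nat.log_pos hprime.one_lt hpn
      simpa
    rw [hprime.pow_dvd_factorial_iff (Nat.lt_succ_self _)]
    simpa using Finset.single_le_sum (f := fun i ↦ n / p ^ i) (fun _ _ ↦ Nat.zero_le _) hone

theorem sum_primesLE_div_mul_log_le (n : ℕ) :
    ∑ p ∈ Nat.primesLE n, ((n / p : ℕ) : ℝ) * Real.log p ≤ n * Real.log n := by
  have hle : ∏ p ∈ Nat.primesLE n, p ^ (n / p) ≤ n ^ n :=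
    (Nat.le_of_dvd n.factorial_pos (prod_primesLE_pow_div_dvd_factorial n)).trans
      n.factorial_le_pow
  have hpos : ∀ p ∈ Nat.primesLE n, 0 < p ^ (n / p) := fun p hp ↦
    pow_pos (Nat.prime_of_mem_primesLE hp).pos _
  have hlog : Real.log (∏ p ∈ Nat.primesLE n, p ^ (n / p) : ℕ) ≤ Real.log (n ^ n : ℕ) :=
    Real.log_le_log (mod_cast Finset.prod_pos hpos) (mod_cast hle)
  rw [Nat.cast_prod, Real.log_prod fun p hp ↦ mod_cast (hpos p hp).ne'] at hlog
  simpa only [Nat.cast_pow, Real.log_pow] using hlog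

theorem sum_primesLE_log_div_le (n : ℕ) :
    ∑ p ∈ Nat.primesLE n, Real.log p / p ≤ Real.log n + Real.log 4 := by
  rcases n.eq_zero_or_pos with rfl | hn
  · simp [Real.log_nonneg]
  have hterm : ∀ p ∈ Nat.primesLE n,
      n * (Real.log p / p) ≤ ((n / p : ℕ) : ℝ) * Real.log p + Real.log p := fun p _ ↦ by
    have hfloor : (n : ℝ) / p ≤ (n / p : ℕ) + 1 := by
      rw [← Nat.floor_div_eq_div (K := ℝ)]
      exact (Nat.lt_floor_add_one _).le
    calc n * (Real.log p / p) = n / p * Real.log p := by ring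
      _ ≤ ((n / p : ℕ) + 1) * Real.log p := by gcongr
      _ = _ := by ring
  have htheta : ∑ p ∈ Nat.primesLE n, Real.log p ≤ Real.log 4 * n := by
    rw [← Chebyshev.theta_eq_sum_primesLE_log]
    exact Chebyshev.theta_le_log4_mul_x n.cast_nonneg
  have hn0 : (0 : ℝ) < n := mod_cast hn
  refine le_of_mul_le_mul_left ?_ hn0
  calc n * ∑ p ∈ Nat.primesLE n, Real.log p / p
      ≤ ∑ p ∈ Nat.primesLE n, (((n / p : ℕ) : ℝ) * Real.log p + Real.log p) := by
        rw [Finset.mul_sum]; exact Finset.sum_le_sum hterm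
    _ ≤ n * Real.log n + Real.log 4 * n := by
        rw [Finset.sum_add_distrib]
        exact add_le_add (sum_primesLE_div_mul_log_le n) htheta
    _ = n * (Real.log n + Real.log 4) := by ring

theorem sum_primesLE_inv_mul_pred_le_one (n : ℕ) :
    ∑ p ∈ Nat.primesLE n, (1 : ℝ) / (p * (p - 1)) ≤ 1 := by
  have hterm : ∀ m ∈ Finset.Ioc 1 (n + 1),
      (1 : ℝ) / (m * (m - 1)) = 1 / ((m - 1 : ℕ) : ℝ) - 1 / m := fun m hm ↦ by
    have hm1 : 1 < m := (Finset.mem_Ioc.1 hm).1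
    have : (1 : ℝ) < m := mod_cast hm1
    have : (m : ℝ) - 1 ≠ 0 := by linarith
    rw [Nat.cast_pred (by lia)]
    field_simp
    ring
  have htelescope : ∀ n : ℕ,
      ∑ m ∈ Finset.Ioc 1 (n + 1), (1 / ((m - 1 : ℕ) : ℝ) - 1 / m) = 1 - 1 / (n + 1) := fun n ↦ by
    induction n with
    | zero => simp
    | succ n ih =>
      rw [Finset.sum_Ioc_succ_top (by lia), ih]
      push_cast
      simp
  calc ∑ p ∈ Nat.primesLE n, (1 : ℝ) / (p * (p - 1))
      ≤ ∑ m ∈ Finset.Ioc 1 (n + 1), (1 : ℝ) / (m * (m - 1)) := by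
        refine Finset.sum_le_sum_of_subset_of_nonneg (fun p hp ↦ ?_) fun m hm _ ↦ ?_
        · obtain ⟨hpn, hprime⟩ := Nat.mem_primesLE.1 hp
          exact Finset.mem_Ioc.2 ⟨hprime.one_lt, by lia⟩
        · have : (1 : ℝ) < m := mod_cast (Finset.mem_Ioc.1 hm).1
          have : (0 : ℝ) < m - 1 := by linarith
          positivity
    _ = 1 - 1 / (n + 1) := by rw [Finset.sum_congr rfl hterm, htelescope]
    _ ≤ 1 := sub_le_self _ (by positivity)

/-- The completely multiplicative function `m ↦ m ^ (-σ)`, the input to the Euler product. -/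
noncomputable def rpowNegHom (σ : ℝ) : ℕ →* ℝ where
  toFun m := (m : ℝ) ^ (-σ)
  map_one' := by simp
  map_mul' a b := by rw [Nat.cast_mul, Real.mul_rpow a.cast_nonneg b.cast_nonneg]

theorem rpowNegHom_apply (σ : ℝ) (m : ℕ) : rpowNegHom σ m = (m : ℝ) ^ (-σ) := rfl

theorem rpowNegHom_lt_one {σ : ℝ} (hσ : 0 < σ) {p : ℕ} (hp : p.Prime) : rpowNegHom σ p < 1 :=
  Real.rpow_lt_one_of_one_lt_of_neg (mod_cast hp.one_lt) (neg_lt_zero.2 hσ)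

theorem hasSum_smoothNumbers_rpow_neg {σ : ℝ} (hσ : 0 < σ) (n : ℕ) :
    HasSum (fun m : (n + 1).smoothNumbers ↦ ((m : ℕ) : ℝ) ^ (-σ))
      (∏ p ∈ Nat.primesLE n, (1 - (p : ℝ) ^ (-σ))⁻¹) := by
  refine (EulerProduct.summable_and_hasSum_smoothNumbers_prod_primesBelow_geometric
    (f := rpowNegHom σ) (fun {p} hp ↦ ?_) (n + 1)).2
  rw [Real.norm_of_nonneg (by rw [rpowNegHom_apply]; positivity)]
  exact rpowNegHom_lt_one hσ hp

theorem log_le_prod_primesLE {x : ℝ} (hx : 0 ≤ x) :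
    Real.log x ≤ ∏ p ∈ Nat.primesLE ⌊x⌋₊, (1 - (p : ℝ)⁻¹)⁻¹ := by
  have hsum := hasSum_smoothNumbers_rpow_neg one_pos ⌊x⌋₊
  simp only [Real.rpow_neg_one] at hsum
  have hsmooth : ∀ m ∈ Finset.Icc 1 ⌊x⌋₊, m ∈ (⌊x⌋₊ + 1).smoothNumbers := fun m hm ↦ by
    rw [Finset.mem_Icc] at hm
    exact Nat.mem_smoothNumbers_of_lt (by lia) (by lia)
  calc Real.log x ≤ harmonic ⌊x⌋₊ := log_le_harmonic_floor x hx
    _ = ∑ m ∈ Finset.Icc 1 ⌊x⌋₊, (m : ℝ)⁻¹ := by rw [harmonic_eq_sum_Icc]; push_cast; rfl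
    _ = ∑ m ∈ (Finset.Icc 1 ⌊x⌋₊).subtype (· ∈ (⌊x⌋₊ + 1).smoothNumbers), ((m : ℕ) : ℝ)⁻¹ :=
        (Finset.sum_subtype_of_mem (fun m : ℕ ↦ (m : ℝ)⁻¹) hsmooth).symm
    _ ≤ _ := sum_le_hasSum _ (fun _ _ ↦ by positivity) hsum

theorem log_log_le_sum_primesLE_inv {x : ℝ} (hx : 1 < x) :
    Real.log (Real.log x) ≤ ∑ p ∈ Nat.primesLE ⌊x⌋₊, (1 : ℝ) / p + 1 := by
  have hfactor : ∀ p ∈ Nat.primesLE ⌊x⌋₊,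
      (1 - (p : ℝ)⁻¹)⁻¹ ≤ Real.exp (1 / p + 1 / (p * (p - 1))) := fun p hp ↦ by
    have hp1 : (1 : ℝ) < p := mod_cast Nat.one_lt_of_mem_primesLE hp
    have hp0 : (p : ℝ) - 1 ≠ 0 := by linarith
    have hsplit : (1 - (p : ℝ)⁻¹)⁻¹ = 1 / p + 1 / (p * (p - 1)) + 1 := by field_simp; ring
    exact hsplit ▸ Real.add_one_le_exp _
  have hnonneg : ∀ p ∈ Nat.primesLE ⌊x⌋₊, 0 ≤ (1 - (p : ℝ)⁻¹)⁻¹ := fun p hp ↦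
    inv_nonneg.2 (sub_nonneg.2 (inv_le_one_of_one_le₀
      (mod_cast (Nat.prime_of_mem_primesLE hp).one_le)))
  have hexp := (log_le_prod_primesLE (zero_le_one.trans hx.le)).trans
    (Finset.prod_le_prod hnonneg hfactor)
  rw [← Real.exp_sum, ← Real.log_le_iff_le_exp (Real.log_pos hx), Finset.sum_add_distrib] at hexp
  linarith [sum_primesLE_inv_mul_pred_le_one ⌊x⌋₊]

theorem rpow_add_one_neg_le {x ε : ℝ} (hx : 0 < x) (hε : 0 < ε) :
    (x + 1) ^ (-(1 + ε)) ≤ (x ^ (-ε) - (x + 1) ^ (-ε)) / ε := by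
  have hx1 : 0 < x + 1 := by linarith
  have hratio : 1 + ε / (x + 1) ≤ ((x + 1) / x) ^ ε := by
    have hlog : 1 / (x + 1) ≤ Real.log ((x + 1) / x) := by
      have := Real.one_sub_inv_le_log_of_pos (div_pos hx1 hx)
      rwa [inv_div, one_sub_div hx1.ne', add_sub_cancel_left] at this
    rw [Real.rpow_def_of_pos (by positivity)]
    calc 1 + ε / (x + 1) = 1 / (x + 1) * ε + 1 := by ring
      _ ≤ Real.log ((x + 1) / x) * ε + 1 := by gcongr
      _ ≤ _ := Real.add_one_le_exp _
  have hpow : x ^ (-ε) = (x + 1) ^ (-ε) * ((x + 1) / x) ^ ε := by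
    rw [Real.div_rpow hx1.le hx.le, Real.rpow_neg hx1.le, Real.rpow_neg hx.le]
    field_simp
  rw [le_div_iff₀ hε, hpow, neg_add, Real.rpow_add hx1, Real.rpow_neg_one]
  calc (x + 1)⁻¹ * (x + 1) ^ (-ε) * ε
      = (x + 1) ^ (-ε) * (1 + ε / (x + 1)) - (x + 1) ^ (-ε) := by ring
    _ ≤ _ := by gcongr

theorem sum_range_rpow_neg_le {ε : ℝ} (hε : 0 < ε) (n : ℕ) :
    ∑ m ∈ Finset.range n, (m : ℝ) ^ (-(1 + ε)) ≤ 1 + 1 / ε := by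
  have htail : ∑ m ∈ Finset.range n, ((m : ℝ) + 1 + 1) ^ (-(1 + ε)) ≤ 1 / ε := by
    calc _ ≤ ∑ m ∈ Finset.range n,
          (((m : ℝ) + 1) ^ (-ε) / ε - (((m + 1 : ℕ) : ℝ) + 1) ^ (-ε) / ε) :=
          Finset.sum_le_sum fun m _ ↦ by
            rw [← sub_div, Nat.cast_add_one]; exact rpow_add_one_neg_le (by positivity) hε
      _ = 1 / ε - ((n : ℝ) + 1) ^ (-ε) / ε := by
          rw [Finset.sum_range_sub' fun m : ℕ ↦ ((m : ℝ) + 1) ^ (-ε) / ε]; simp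
      _ ≤ 1 / ε := sub_le_self _ (by positivity)
  calc _ ≤ ∑ m ∈ Finset.range (n + 2), (m : ℝ) ^ (-(1 + ε)) :=
        Finset.sum_le_sum_of_subset_of_nonneg (Finset.range_mono (by lia))
          fun _ _ _ ↦ by positivity
    _ = ∑ m ∈ Finset.range n, ((m : ℝ) + 1 + 1) ^ (-(1 + ε)) + 1 := by
        rw [Finset.sum_range_succ', Finset.sum_range_succ']
        simp [show -ε + -1 ≠ 0 by linarith]
    _ ≤ 1 + 1 / ε := by linarith

theorem exp_sum_primesLE_rpow_neg_le {ε : ℝ} (hε : 0 < ε) (n : ℕ) :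
    Real.exp (∑ p ∈ Nat.primesLE n, (p : ℝ) ^ (-(1 + ε))) ≤ 1 + 1 / ε := by
  have hσ : 0 < 1 + ε := by linarith
  have hsummable : Summable fun m : ℕ ↦ (m : ℝ) ^ (-(1 + ε)) :=
    Real.summable_nat_rpow.2 (by linarith)
  calc _ ≤ ∏ p ∈ Nat.primesLE n, (1 - (p : ℝ) ^ (-(1 + ε)))⁻¹ := by
        rw [Real.exp_sum]
        refine Finset.prod_le_prod (fun _ _ ↦ (Real.exp_pos _).le) fun p hp ↦ ?_
        have hlt := rpowNegHom_lt_one hσ (Nat.prime_of_mem_primesLE hp)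
        rw [rpowNegHom_apply] at hlt
        rw [le_inv_comm₀ (Real.exp_pos _) (by linarith), ← Real.exp_neg]
        exact Real.one_sub_le_exp_neg _
    _ = ∑' m : (n + 1).smoothNumbers, ((m : ℕ) : ℝ) ^ (-(1 + ε)) :=
        (hasSum_smoothNumbers_rpow_neg hσ n).tsum_eq.symm
    _ ≤ ∑' m : ℕ, (m : ℝ) ^ (-(1 + ε)) :=
        hsummable.tsum_subtype_le (fun m : ℕ ↦ (m : ℝ) ^ (-(1 + ε))) _ fun _ ↦ by positivity
    _ ≤ 1 + 1 / ε :=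
        Real.tsum_le_of_sum_range_le (fun _ ↦ by positivity) (sum_range_rpow_neg_le hε)

theorem inv_sub_rpow_neg_le {p : ℝ} (hp : 0 < p) (ε : ℝ) :
    1 / p - p ^ (-(1 + ε)) ≤ ε * (Real.log p / p) := by
  have hexp : 1 - ε * Real.log p ≤ p ^ (-ε) := by
    rw [Real.rpow_def_of_pos hp]
    linarith [Real.add_one_le_exp (Real.log p * -ε)]
  rw [neg_add, Real.rpow_add hp, Real.rpow_neg_one]
  calc 1 / p - p⁻¹ * p ^ (-ε) ≤ 1 / p - p⁻¹ * (1 - ε * Real.log p) := by gcongr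
    _ = _ := by ring

theorem sum_primesLE_inv_le_log_log {x : ℝ} (hx : 3 ≤ x) :
    ∑ p ∈ Nat.primesLE ⌊x⌋₊, (1 : ℝ) / p ≤ Real.log (Real.log x) + 4 := by
  set L := Real.log x with hL
  have hL1 : 1 ≤ L := by
    rw [hL, Real.le_log_iff_exp_le (by linarith)]
    linarith [Real.exp_one_lt_d9]
  have hL0 : 0 < L := by linarith
  have hlog4 : Real.log 4 ≤ 2 := by
    rw [show (4 : ℝ) = 2 ^ 2 by norm_num, Real.log_pow]
    push_cast
    linarith [Real.log_two_lt_d9]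
  have hmain : ∑ p ∈ Nat.primesLE ⌊x⌋₊, (p : ℝ) ^ (-(1 + 1 / L)) ≤ Real.log L + 1 := by
    rw [← Real.exp_le_exp, Real.exp_add, Real.exp_log hL0]
    refine (exp_sum_primesLE_rpow_neg_le (one_div_pos.2 hL0) _).trans ?_
    rw [one_div_one_div]
    nlinarith [Real.exp_one_gt_d9]
  have hdiff : ∑ p ∈ Nat.primesLE ⌊x⌋₊, ((1 : ℝ) / p - (p : ℝ) ^ (-(1 + 1 / L))) ≤ 3 := by
    calc _ ≤ ∑ p ∈ Nat.primesLE ⌊x⌋₊, 1 / L * (Real.log p / p) :=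
          Finset.sum_le_sum fun p hp ↦
            inv_sub_rpow_neg_le (mod_cast (Nat.prime_of_mem_primesLE hp).pos) _
      _ ≤ 1 / L * (L + 2) := by
          rw [← Finset.mul_sum]
          gcongr
          refine (sum_primesLE_log_div_le _).trans (add_le_add ?_ hlog4)
          exact Real.log_le_log (mod_cast Nat.floor_pos.2 (by linarith))
            (Nat.floor_le (by linarith))
      _ ≤ 3 := by rw [one_div_mul_eq_div, div_le_iff₀ hL0]; linarith
  rw [Finset.sum_sub_distrib] at hdiff
  linarith

end Mertens

section SelbergSieve

open ArithmeticFunction BoundingSieve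
open scoped ArithmeticFunction.Moebius

theorem card_filter_natCast_le (s : Finset ℕ) (hs : ∀ d ∈ s, 0 < d) {y : ℝ} (hy : 0 ≤ y) :
    ((s.filter fun d : ℕ ↦ (d : ℝ) ≤ y).card : ℝ) ≤ y := by
  have hsub : (s.filter fun d : ℕ ↦ (d : ℝ) ≤ y) ⊆ Finset.Ioc 0 ⌊y⌋₊ := fun d hd ↦ by
    rw [Finset.mem_filter] at hd
    exact Finset.mem_Ioc.2 ⟨hs d hd.1, Nat.le_floor hd.2⟩
  calc ((s.filter fun d : ℕ ↦ (d : ℝ) ≤ y).card : ℝ) ≤ (⌊y⌋₊ : ℝ) := by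
        simpa using Finset.card_le_card hsub
    _ ≤ y := Nat.floor_le hy

theorem sum_divisors_filter_dvd_moebius {m : ℕ} (hm : Squarefree m) (l : ℕ) :
    ∑ d ∈ m.divisors with l ∣ d, μ d = if m = l then μ l else 0 := by
  by_cases hlm : l ∣ m
  · obtain ⟨e, rfl⟩ := hlm
    obtain ⟨hcop, -, he⟩ := Nat.squarefree_mul_iff.1 hm
    have hl0 : l ≠ 0 := left_ne_zero_of_mul hm.ne_zero
    have himage : (l * e).divisors.filter (l ∣ ·) = e.divisors.image (l * ·) := by
      ext d
      simp only [Finset.mem_filter, Nat.mem_divisors, Finset.mem_image]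
      constructor
      · rintro ⟨⟨hd, -⟩, f, rfl⟩
        exact ⟨f, ⟨Nat.dvd_of_mul_dvd_mul_left (Nat.pos_of_ne_zero hl0) hd, he.ne_zero⟩, rfl⟩
      · rintro ⟨f, ⟨hf, -⟩, rfl⟩
        exact ⟨⟨Nat.mul_dvd_mul_left l hf, hm.ne_zero⟩, dvd_mul_right l f⟩
    calc ∑ d ∈ (l * e).divisors with l ∣ d, μ d = ∑ f ∈ e.divisors, μ (l * f) := by
          rw [himage, Finset.sum_image fun _ _ _ _ h ↦ mul_left_cancel₀ hl0 h]
      _ = μ l * ∑ f ∈ e.divisors, μ f := by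
          rw [Finset.mul_sum]
          exact Finset.sum_congr rfl fun f hf ↦ isMultiplicative_moebius.map_mul_of_coprime
            (hcop.coprime_dvd_right (Nat.dvd_of_mem_divisors hf))
      _ = if l * e = l then μ l else 0 := by
          rw [← coe_zeta_mul_apply, coe_zeta_mul_moebius, one_apply]
          simp [hl0]
  · rw [if_neg fun h ↦ hlm h.symm.dvd, Finset.filter_false_of_mem, Finset.sum_empty]
    exact fun d hd hld ↦ hlm (hld.trans (Nat.dvd_of_mem_divisors hd))

variable (s : BoundingSieve)

/-- The Selberg sum `∑ g(l)` over the divisors `l ≤ R` of the sifting product, whose inverse is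
the main term of the sieve. -/
noncomputable def selbergMass (R : ℝ) : ℝ :=
  ∑ l ∈ s.prodPrimes.divisors with ((l : ℕ) : ℝ) ≤ R, s.selbergTerms l

/-- The optimal weights of the Selberg sieve of level `R ^ 2`; they vanish at non-divisors of the
sifting product, where the inner sum is empty. -/
noncomputable def selbergWeight (R : ℝ) (d : ℕ) : ℝ :=
  (s.nu d)⁻¹ * μ d *
    ((∑ l ∈ s.prodPrimes.divisors with d ∣ l ∧ ((l : ℕ) : ℝ) ≤ R, s.selbergTerms l) /
      selbergMass s R)

variable {s} {R : ℝ}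

theorem selbergMass_pos (hR : 1 ≤ R) : 0 < selbergMass s R :=
  Finset.sum_pos (fun _ hl ↦ selbergTerms_pos (Nat.dvd_of_mem_divisors (Finset.mem_filter.1 hl).1))
    ⟨1, by simp [hR, prodPrimes_ne_zero]⟩

theorem selbergWeight_one (hR : 1 ≤ R) : selbergWeight s R 1 = 1 := by
  have hmass := (selbergMass_pos (s := s) hR).ne'
  simp only [selbergWeight, one_dvd, true_and, s.nu_mult.map_one, moebius_apply_one]
  rw [← selbergMass, div_self hmass]
  norm_num

theorem selbergWeight_eq_zero {d : ℕ} (hd : R < d) : selbergWeight s R d = 0 := by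
  have hempty : (s.prodPrimes.divisors.filter fun l : ℕ ↦ d ∣ l ∧ (l : ℝ) ≤ R) = ∅ := by
    refine Finset.filter_false_of_mem fun l hl ⟨hdl, hlR⟩ ↦ ?_
    have : (d : ℝ) ≤ l := mod_cast Nat.le_of_dvd (Nat.pos_of_mem_divisors hl) hdl
    exact hd.not_ge (this.trans hlR)
  rw [selbergWeight, hempty, Finset.sum_empty, zero_div, mul_zero]

theorem abs_selbergWeight_le (hR : 1 ≤ R) {d : ℕ} (hd : d ∣ s.prodPrimes) :
    |selbergWeight s R d| ≤ (s.nu d)⁻¹ := by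
  have hmass := selbergMass_pos (s := s) hR
  have hterm : ∀ l ∈ s.prodPrimes.divisors, 0 ≤ s.selbergTerms l := fun l hl ↦
    (selbergTerms_pos (Nat.dvd_of_mem_divisors hl)).le
  have hmoebius : |(μ d : ℝ)| ≤ 1 := mod_cast abs_moebius_le_one
  have hratio : |(∑ l ∈ s.prodPrimes.divisors with d ∣ l ∧ ((l : ℕ) : ℝ) ≤ R, s.selbergTerms l) /
      selbergMass s R| ≤ 1 := by
    rw [abs_div, abs_of_pos hmass, div_le_one hmass,
      abs_of_nonneg (Finset.sum_nonneg fun l hl ↦ hterm l (Finset.mem_filter.1 hl).1)]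
    exact Finset.sum_le_sum_of_subset_of_nonneg
      (Finset.monotone_filter_right _ fun _ _ h ↦ h.2)
      fun l hl _ ↦ hterm l (Finset.mem_filter.1 hl).1
  have hnu := inv_pos.2 (nu_pos_of_dvd_prodPrimes hd)
  rw [selbergWeight, abs_mul, abs_mul, abs_of_pos hnu, mul_assoc]
  exact mul_le_of_le_one_right hnu.le (mul_le_one₀ hmoebius (abs_nonneg _) hratio)

theorem sum_nu_mul_selbergWeight {l : ℕ} (hl : l ∣ s.prodPrimes) :
    (∑ d ∈ s.prodPrimes.divisors, if l ∣ d then s.nu d * selbergWeight s R d else 0) =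
      if (l : ℝ) ≤ R then μ l * s.selbergTerms l / selbergMass s R else 0 := by
  calc _ = ∑ d ∈ s.prodPrimes.divisors with l ∣ d,
        ∑ m ∈ s.prodPrimes.divisors with d ∣ m ∧ ((m : ℕ) : ℝ) ≤ R,
          (μ d : ℝ) * (s.selbergTerms m / selbergMass s R) := by
        rw [← Finset.sum_filter]
        refine Finset.sum_congr rfl fun d hd ↦ ?_
        have hnu : s.nu d ≠ 0 :=
          nu_ne_zero (Nat.dvd_of_mem_divisors (Finset.mem_filter.1 hd).1)
        rw [selbergWeight, ← Finset.mul_sum, ← Finset.sum_div, mul_assoc, mul_inv_cancel_left₀ hnu]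
    _ = ∑ m ∈ s.prodPrimes.divisors with ((m : ℕ) : ℝ) ≤ R, ∑ d ∈ m.divisors with l ∣ d,
          (μ d : ℝ) * (s.selbergTerms m / selbergMass s R) := by
        refine Finset.sum_comm' fun d m ↦ ?_
        simp only [Finset.mem_filter, Nat.mem_divisors]
        have := prodPrimes_ne_zero (s := s)
        exact ⟨fun ⟨⟨_, hld⟩, ⟨hm, _⟩, hdm, hmR⟩ ↦
            ⟨⟨⟨hdm, ne_zero_of_dvd_ne_zero this hm⟩, hld⟩, ⟨hm, this⟩, hmR⟩,
          fun ⟨⟨⟨hdm, _⟩, hld⟩, ⟨hm, _⟩, hmR⟩ ↦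
            ⟨⟨⟨hdm.trans hm, this⟩, hld⟩, ⟨hm, this⟩, hdm, hmR⟩⟩
    _ = ∑ m ∈ s.prodPrimes.divisors with ((m : ℕ) : ℝ) ≤ R,
          if m = l then (μ l : ℝ) * (s.selbergTerms m / selbergMass s R) else 0 := by
        refine Finset.sum_congr rfl fun m hm ↦ ?_
        have hsq := squarefree_of_mem_divisors_prodPrimes (Finset.mem_filter.1 hm).1
        rw [← Finset.sum_mul, ← Int.cast_sum, sum_divisors_filter_dvd_moebius hsq]
        split_ifs <;> simp
    _ = _ := by
        rw [Finset.sum_ite_eq']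
        simp [hl, prodPrimes_ne_zero, mul_div_assoc]

theorem mainSum_lambdaSquared_selbergWeight (hR : 1 ≤ R) :
    s.mainSum (lambdaSquared (selbergWeight s R)) = 1 / selbergMass s R := by
  have hmass := (selbergMass_pos (s := s) hR).ne'
  rw [mainSum_lambdaSquared_eq_sum_mul_sum_sq]
  calc _ = ∑ l ∈ s.prodPrimes.divisors,
        if (l : ℝ) ≤ R then s.selbergTerms l / selbergMass s R ^ 2 else 0 := by
        refine Finset.sum_congr rfl fun l hl ↦ ?_
        have hlP := Nat.dvd_of_mem_divisors hl
        have hterm := (selbergTerms_pos hlP).ne'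
        have hmoebius : (μ l : ℝ) ^ 2 = 1 :=
          mod_cast moebius_sq_eq_one_of_squarefree (squarefree_of_dvd_prodPrimes hlP)
        rw [sum_nu_mul_selbergWeight hlP]
        split_ifs
        · rw [div_pow, mul_pow, hmoebius]
          field_simp
        · simp
    _ = selbergMass s R / selbergMass s R ^ 2 := by
        rw [← Finset.sum_filter, ← Finset.sum_div, ← selbergMass]
    _ = 1 / selbergMass s R := by field_simp

theorem abs_lambdaSquared_le {w : ℕ → ℝ} (hR : 0 ≤ R) {d : ℕ}
    (hw : ∀ e ∈ d.divisors, |w e| ≤ if (e : ℝ) ≤ R then R else 0) :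
    |lambdaSquared w d| ≤ R ^ 4 := by
  have hsum : ∑ e ∈ d.divisors, |w e| ≤ R * R := by
    calc ∑ e ∈ d.divisors, |w e| ≤ ∑ e ∈ d.divisors, if (e : ℝ) ≤ R then R else 0 :=
          Finset.sum_le_sum hw
      _ = ((d.divisors.filter fun e : ℕ ↦ (e : ℝ) ≤ R).card : ℝ) * R := by
          rw [← Finset.sum_filter, Finset.sum_const, nsmul_eq_mul]
      _ ≤ R * R := by
          gcongr
          exact card_filter_natCast_le _ (fun _ ↦ Nat.pos_of_mem_divisors) hR
  calc |lambdaSquared w d| ≤ ∑ d₁ ∈ d.divisors, ∑ d₂ ∈ d.divisors, |w d₁| * |w d₂| := by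
        refine (Finset.abs_sum_le_sum_abs _ _).trans (Finset.sum_le_sum fun d₁ _ ↦ ?_)
        refine (Finset.abs_sum_le_sum_abs _ _).trans (Finset.sum_le_sum fun d₂ _ ↦ ?_)
        split_ifs
        · exact (abs_mul _ _).le
        · rw [abs_zero]; positivity
    _ = (∑ e ∈ d.divisors, |w e|) * ∑ e ∈ d.divisors, |w e| := (Finset.sum_mul_sum _ _ _ _).symm
    _ ≤ (R * R) * (R * R) := by gcongr
    _ = R ^ 4 := by ring

theorem lambdaSquared_eq_zero {w : ℕ → ℝ} (hR : 0 ≤ R) (hw : ∀ e : ℕ, R < e → w e = 0) {d : ℕ}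
    (hd : R ^ 2 < d) : lambdaSquared w d = 0 := by
  refine Finset.sum_eq_zero fun d₁ hd₁ ↦ Finset.sum_eq_zero fun d₂ hd₂ ↦ ?_
  split_ifs with hlcm
  swap
  · rfl
  rcases lt_or_ge R d₁ with h₁ | h₁
  · rw [hw d₁ h₁, zero_mul]
  rcases lt_or_ge R d₂ with h₂ | h₂
  · rw [hw d₂ h₂, mul_zero]
  have hle : d ≤ d₁ * d₂ := hlcm ▸ Nat.le_of_dvd
    (mul_pos (Nat.pos_of_mem_divisors hd₁) (Nat.pos_of_mem_divisors hd₂)) (Nat.lcm_dvd_mul d₁ d₂)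
  have : (d : ℝ) ≤ d₁ * d₂ := mod_cast hle
  have : (d₁ : ℝ) * d₂ ≤ R * R := by gcongr
  nlinarith

theorem errSum_lambdaSquared_selbergWeight_le (hR : 1 ≤ R)
    (hnu : ∀ d, d ∣ s.prodPrimes → (s.nu d)⁻¹ ≤ d) (hrem : ∀ d, d ∣ s.prodPrimes → |s.rem d| ≤ d) :
    s.errSum (lambdaSquared (selbergWeight s R)) ≤ R ^ 8 := by
  have hR0 : 0 ≤ R := zero_le_one.trans hR
  have hweight : ∀ d, d ∣ s.prodPrimes →
      |selbergWeight s R d| ≤ if (d : ℝ) ≤ R then R else 0 := fun d hd ↦ by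
    split_ifs with hdR
    · exact (abs_selbergWeight_le hR hd).trans ((hnu d hd).trans hdR)
    · rw [selbergWeight_eq_zero (not_le.1 hdR), abs_zero]
  calc s.errSum (lambdaSquared (selbergWeight s R))
      ≤ ∑ d ∈ s.prodPrimes.divisors, if (d : ℝ) ≤ R ^ 2 then R ^ 4 * R ^ 2 else 0 := by
        refine Finset.sum_le_sum fun d hd ↦ ?_
        have hdP := Nat.dvd_of_mem_divisors hd
        split_ifs with hdR
        · have := abs_lambdaSquared_le hR0 fun e he ↦
            hweight e ((Nat.dvd_of_mem_divisors he).trans hdP)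
          have := (hrem d hdP).trans hdR
          gcongr
        · rw [lambdaSquared_eq_zero hR0 (fun _ ↦ selbergWeight_eq_zero) (not_le.1 hdR), abs_zero,
            zero_mul]
    _ = ((s.prodPrimes.divisors.filter fun d : ℕ ↦ (d : ℝ) ≤ R ^ 2).card : ℝ) *
          (R ^ 4 * R ^ 2) := by
        rw [← Finset.sum_filter, Finset.sum_const, nsmul_eq_mul]
    _ ≤ R ^ 2 * (R ^ 4 * R ^ 2) := by
        gcongr
        exact card_filter_natCast_le _ (fun _ ↦ Nat.pos_of_mem_divisors) (sq_nonneg R)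
    _ = R ^ 8 := by ring

theorem siftedSum_le_div_selbergMass_add (hR : 1 ≤ R)
    (hnu : ∀ d, d ∣ s.prodPrimes → (s.nu d)⁻¹ ≤ d) (hrem : ∀ d, d ∣ s.prodPrimes → |s.rem d| ≤ d) :
    siftedSum (s := s) ≤ s.totalMass / selbergMass s R + R ^ 8 := by
  refine (siftedSum_le_mainSum_errSum_of_upperMoebius (s := s)
    (lambdaSquared (selbergWeight s R))
    (upperMoebius_lambdaSquared _ (selbergWeight_one hR))).trans ?_
  rw [mainSum_lambdaSquared_selbergWeight hR, mul_one_div]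
  gcongr
  exact errSum_lambdaSquared_selbergWeight_le hR hnu hrem

end SelbergSieve

section Rankin

open ArithmeticFunction BoundingSieve

theorem prod_one_add_sub_le_sum_divisors_filter {g : ArithmeticFunction ℝ}
    (hg : g.IsMultiplicative) {Q : ℕ} (hQ : Squarefree Q) (hg0 : ∀ d, d ∣ Q → 0 ≤ g d) {R ε : ℝ}
    (hR : 0 < R) (hε : 0 < ε) :
    ∏ p ∈ Q.primeFactors, (1 + g p) -
        R ^ (-ε) * ∏ p ∈ Q.primeFactors, (1 + g p * (p : ℝ) ^ ε) ≤
      ∑ d ∈ Q.divisors with ((d : ℕ) : ℝ) ≤ R, g d := by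
  let pow : ArithmeticFunction ℝ := ⟨fun d ↦ (d : ℝ) ^ ε, by simp [hε.ne']⟩
  have hpow : pow.IsMultiplicative :=
    ⟨by simp [pow], fun _ ↦ by simp [pow, Real.mul_rpow]⟩
  have hprod : ∏ p ∈ Q.primeFactors, (1 + g p * (p : ℝ) ^ ε) =
      ∑ d ∈ Q.divisors, g d * (d : ℝ) ^ ε :=
    (hg.pmul hpow).prodPrimeFactors_one_add_of_squarefree hQ
  rw [hg.prodPrimeFactors_one_add_of_squarefree hQ, hprod, Finset.mul_sum,
    ← Finset.sum_sub_distrib, Finset.sum_filter]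
  refine Finset.sum_le_sum fun d hd ↦ ?_
  have hgd := hg0 d (Nat.dvd_of_mem_divisors hd)
  split_ifs with hdR
  · have : 0 ≤ R ^ (-ε) * (g d * (d : ℝ) ^ ε) := by positivity
    linarith
  · have hone : 1 ≤ R ^ (-ε) * (d : ℝ) ^ ε := by
      rw [Real.rpow_neg hR.le, inv_mul_eq_div, one_le_div (by positivity)]
      exact Real.rpow_le_rpow hR.le (not_le.1 hdR).le hε.le
    nlinarith

theorem rpow_inv_sub_one_le {x L : ℝ} (hx : 1 ≤ x) (hL : 0 < L) (hxL : Real.log x ≤ L) :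
    x ^ L⁻¹ - 1 ≤ 2 * (Real.log x / L) := by
  have hx0 : 0 < x := zero_lt_one.trans_le hx
  have hlog := Real.log_nonneg hx
  have hdiv : |Real.log x / L| = Real.log x / L := abs_of_nonneg (by positivity)
  rw [Real.rpow_def_of_pos hx0, ← div_eq_mul_inv]
  calc _ ≤ 2 * |Real.log x / L| :=
        (le_abs_self _).trans (Real.abs_exp_sub_one_le (by rwa [hdiv, div_le_one hL]))
    _ = 2 * (Real.log x / L) := by rw [hdiv]

theorem one_add_mul_le_one_add_mul_exp {g t u : ℝ} (hg : 0 ≤ g) (ht : 1 ≤ t)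
    (hu : g * (t - 1) ≤ u) : 1 + g * t ≤ (1 + g) * Real.exp u := by
  have hexp := Real.add_one_le_exp u
  have hg' : 0 ≤ g * (t - 1) := mul_nonneg hg (sub_nonneg.2 ht)
  calc 1 + g * t ≤ (1 + g) * (1 + g * (t - 1)) := by nlinarith
    _ ≤ (1 + g) * Real.exp u := by gcongr; linarith

variable {s : BoundingSieve}

theorem one_add_selbergTerms {p : ℕ} (hp : p.Prime) (hps : p ∣ s.prodPrimes) :
    1 + s.selbergTerms p = (1 - s.nu p)⁻¹ := by
  have hnu := (nu_lt_one_of_prime s p hp hps)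
  rw [selbergTerms_apply, hp.primeFactors, Finset.prod_singleton]
  have : 1 - s.nu p ≠ 0 := by linarith
  field_simp
  ring

theorem exp_sum_nu_le_prod_one_add_selbergTerms :
    Real.exp (∑ p ∈ s.prodPrimes.primeFactors, s.nu p) ≤
      ∏ p ∈ s.prodPrimes.primeFactors, (1 + s.selbergTerms p) := by
  rw [Real.exp_sum]
  refine Finset.prod_le_prod (fun _ _ ↦ (Real.exp_pos _).le) fun p hp ↦ ?_
  have hp' := Nat.prime_of_mem_primeFactors hp
  have hps := Nat.dvd_of_mem_primeFactors hp
  have hnu := s.nu_lt_one_of_prime p hp' hps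
  rw [one_add_selbergTerms hp' hps, le_inv_comm₀ (Real.exp_pos _) (by linarith), ← Real.exp_neg]
  linarith [Real.add_one_le_exp (-s.nu p)]

theorem selbergTerms_le_two_mul_nu {p : ℕ} (hp : p.Prime) (hps : p ∣ s.prodPrimes)
    (hnu : s.nu p ≤ 1 / 2) : s.selbergTerms p ≤ 2 * s.nu p := by
  have hpos := s.nu_pos_of_prime p hp hps
  have hinv : (1 - s.nu p)⁻¹ ≤ 1 + 2 * s.nu p := by
    rw [inv_le_iff_one_le_mul₀ (by linarith)]
    nlinarith
  linarith [one_add_selbergTerms hp hps]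

variable {R L C : ℝ}

theorem prod_one_add_selbergTerms_mul_rpow_le (hL : 0 < L)
    (hnu : ∀ p ∈ s.prodPrimes.primeFactors, s.nu p ≤ 1 / 2)
    (hlog : ∀ p ∈ s.prodPrimes.primeFactors, Real.log p ≤ L)
    (hsum : ∑ p ∈ s.prodPrimes.primeFactors, s.nu p * Real.log p ≤ C * L) :
    ∏ p ∈ s.prodPrimes.primeFactors, (1 + s.selbergTerms p * (p : ℝ) ^ L⁻¹) ≤
      (∏ p ∈ s.prodPrimes.primeFactors, (1 + s.selbergTerms p)) * Real.exp (4 * C) := by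
  have hpos : ∀ p ∈ s.prodPrimes.primeFactors, 0 ≤ s.selbergTerms p := fun p hp ↦
    (selbergTerms_pos (Nat.dvd_of_mem_primeFactors hp)).le
  calc _ ≤ ∏ p ∈ s.prodPrimes.primeFactors,
        ((1 + s.selbergTerms p) * Real.exp (4 / L * (s.nu p * Real.log p))) := by
        refine Finset.prod_le_prod (fun p hp ↦ ?_) fun p hp ↦ ?_
        · have := hpos p hp
          positivity
        have hp' := Nat.prime_of_mem_primeFactors hp
        have hps := Nat.dvd_of_mem_primeFactors hp
        have hone : (1 : ℝ) ≤ p := mod_cast hp'.one_le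
        have hrpow : (1 : ℝ) ≤ (p : ℝ) ^ L⁻¹ := Real.one_le_rpow hone (inv_pos.2 hL).le
        refine one_add_mul_le_one_add_mul_exp (hpos p hp) hrpow ?_
        calc _ ≤ 2 * s.nu p * (2 * (Real.log p / L)) :=
              mul_le_mul (selbergTerms_le_two_mul_nu hp' hps (hnu p hp))
                (rpow_inv_sub_one_le hone hL (hlog p hp)) (sub_nonneg.2 hrpow)
                (mul_pos two_pos (s.nu_pos_of_prime p hp' hps)).le
          _ = _ := by ring
    _ = (∏ p ∈ s.prodPrimes.primeFactors, (1 + s.selbergTerms p)) *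
          Real.exp (4 / L * ∑ p ∈ s.prodPrimes.primeFactors, s.nu p * Real.log p) := by
        rw [Finset.prod_mul_distrib, ← Real.exp_sum, Finset.mul_sum]
    _ ≤ _ := by
        refine mul_le_mul_of_nonneg_left (Real.exp_le_exp.2 ?_)
          (Finset.prod_nonneg fun p hp ↦ add_nonneg zero_le_one (hpos p hp))
        calc _ ≤ 4 / L * (C * L) := by gcongr
          _ = 4 * C := by field_simp

-- Rankin's trick: the divisors beyond `R` are discarded at the cost of the factor `(l / R) ^ L⁻¹`.
theorem half_mul_exp_sum_nu_le_selbergMass (hR : 0 < R) (hL : 0 < L)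
    (hnu : ∀ p ∈ s.prodPrimes.primeFactors, s.nu p ≤ 1 / 2)
    (hlog : ∀ p ∈ s.prodPrimes.primeFactors, Real.log p ≤ L)
    (hsum : ∑ p ∈ s.prodPrimes.primeFactors, s.nu p * Real.log p ≤ C * L)
    (hRL : (4 * C + 1) * L ≤ Real.log R) :
    1 / 2 * Real.exp (∑ p ∈ s.prodPrimes.primeFactors, s.nu p) ≤ selbergMass s R := by
  set G := ∏ p ∈ s.prodPrimes.primeFactors, (1 + s.selbergTerms p)
  have hG : Real.exp (∑ p ∈ s.prodPrimes.primeFactors, s.nu p) ≤ G :=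
    exp_sum_nu_le_prod_one_add_selbergTerms
  have hG0 : 0 ≤ G := (Real.exp_pos _).le.trans hG
  have htail : R ^ (-L⁻¹) * Real.exp (4 * C) ≤ 1 / 2 := by
    have hexponent : 4 * C + 1 ≤ Real.log R * L⁻¹ := by
      rwa [← div_eq_mul_inv, le_div_iff₀ hL]
    calc R ^ (-L⁻¹) * Real.exp (4 * C) ≤ Real.exp (-1) := by
          rw [Real.rpow_def_of_pos hR, ← Real.exp_add]
          exact Real.exp_le_exp.2 (by linarith)
      _ ≤ 1 / 2 := by
          rw [Real.exp_neg, one_div]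
          exact inv_anti₀ two_pos (by linarith [Real.exp_one_gt_d9])
  calc _ ≤ 1 / 2 * G := by gcongr
    _ ≤ G - R ^ (-L⁻¹) * (G * Real.exp (4 * C)) := by nlinarith
    _ ≤ G - R ^ (-L⁻¹) *
          ∏ p ∈ s.prodPrimes.primeFactors, (1 + s.selbergTerms p * (p : ℝ) ^ L⁻¹) := by
        gcongr
        exact prod_one_add_selbergTerms_mul_rpow_le hL hnu hlog hsum
    _ ≤ selbergMass s R :=
        prod_one_add_sub_le_sum_divisors_filter selbergTerms_isMultiplicative
          s.prodPrimes_squarefree (fun _ hd ↦ (selbergTerms_pos hd).le) hR (inv_pos.2 hL)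

theorem siftedSum_le_mul_exp_neg_sum_nu_add (hmass : 0 ≤ s.totalMass) (hR : 1 ≤ R) (hL : 0 < L)
    (hnu : ∀ d, d ∣ s.prodPrimes → (s.nu d)⁻¹ ≤ d) (hrem : ∀ d, d ∣ s.prodPrimes → |s.rem d| ≤ d)
    (hhalf : ∀ p ∈ s.prodPrimes.primeFactors, s.nu p ≤ 1 / 2)
    (hlog : ∀ p ∈ s.prodPrimes.primeFactors, Real.log p ≤ L)
    (hsum : ∑ p ∈ s.prodPrimes.primeFactors, s.nu p * Real.log p ≤ C * L)
    (hRL : (4 * C + 1) * L ≤ Real.log R) :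
    siftedSum (s := s) ≤
      2 * s.totalMass * Real.exp (-∑ p ∈ s.prodPrimes.primeFactors, s.nu p) + R ^ 8 := by
  refine (siftedSum_le_div_selbergMass_add hR hnu hrem).trans ?_
  gcongr
  calc s.totalMass / selbergMass s R
      ≤ s.totalMass / (1 / 2 * Real.exp (∑ p ∈ s.prodPrimes.primeFactors, s.nu p)) := by
        gcongr
        exact half_mul_exp_sum_nu_le_selbergMass (by linarith) hL hhalf hlog hsum hRL
    _ = _ := by rw [Real.exp_neg]; field_simp

end Rankin

section PolynomialSieve

open Polynomial ArithmeticFunction BoundingSieve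

/-- The number of roots of `f` modulo `d`. -/
noncomputable def rootCount (f : ℤ[X]) (d : ℕ) : ℕ :=
  Nat.card {t : ZMod d // aeval t f = 0}

/-- The proportion of residue classes modulo `d` that are roots of `f`. -/
noncomputable def rootDensity (f : ℤ[X]) : ArithmeticFunction ℝ :=
  ⟨fun d ↦ rootCount f d / d, by simp⟩

theorem rootDensity_apply (f : ℤ[X]) (d : ℕ) : rootDensity f d = rootCount f d / d := rfl

theorem rootCount_one (f : ℤ[X]) : rootCount f 1 = 1 :=
  Nat.card_eq_one_iff_unique.2
    ⟨⟨fun _ _ ↦ Subtype.ext (Subsingleton.elim _ _)⟩, ⟨⟨0, Subsingleton.elim _ _⟩⟩⟩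

theorem rootCount_mul (f : ℤ[X]) {m n : ℕ} (h : m.Coprime n) :
    rootCount f (m * n) = rootCount f m * rootCount f n := by
  let e := ZMod.chineseRemainder h
  have hroot : ∀ t, aeval t f = 0 ↔ aeval (e t).1 f = 0 ∧ aeval (e t).2 f = 0 := fun t ↦ by
    have h₁ : aeval (e t).1 f = (e (aeval t f)).1 :=
      aeval_algHom_apply ((RingHom.fst _ _).comp e.toRingHom).toIntAlgHom t f
    have h₂ : aeval (e t).2 f = (e (aeval t f)).2 :=
      aeval_algHom_apply ((RingHom.snd _ _).comp e.toRingHom).toIntAlgHom t f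
    rw [h₁, h₂, ← map_eq_zero_iff e e.injective, Prod.ext_iff, Prod.fst_zero, Prod.snd_zero]
  rw [rootCount, rootCount, rootCount, ← Nat.card_prod]
  exact Nat.card_congr ((e.toEquiv.subtypeEquiv hroot).trans Equiv.subtypeProdEquivProd)

theorem rootDensity_isMultiplicative (f : ℤ[X]) : (rootDensity f).IsMultiplicative := by
  refine ⟨by simp [rootDensity_apply, rootCount_one], fun h ↦ ?_⟩
  simp only [rootDensity_apply, rootCount_mul f h, Nat.cast_mul, mul_div_mul_comm]

theorem inv_rootDensity_le (f : ℤ[X]) (d : ℕ) : (rootDensity f d)⁻¹ ≤ d := by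
  rw [rootDensity_apply, inv_div]
  rcases (rootCount f d).eq_zero_or_pos with h | h
  · simp [h]
  · exact div_le_self (Nat.cast_nonneg d) (mod_cast h)

theorem rootCount_le (f : ℤ[X]) (d : ℕ) [NeZero d] : rootCount f d ≤ d :=
  (Finite.card_subtype_le _).trans_eq (Nat.card_zmod d)

theorem aeval_natCast_eq_zero_iff (f : ℤ[X]) (d n : ℕ) :
    aeval (n : ZMod d) f = 0 ↔ (d : ℤ) ∣ f.eval (n : ℤ) := by
  have heval := aeval_algebraMap_apply_eq_algebraMap_eval (A := ZMod d) (n : ℤ) f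
  simp only [algebraMap_int_eq, eq_intCast, Int.cast_natCast] at heval
  rw [heval, ZMod.intCast_zmod_eq_zero_iff_dvd]

theorem abs_card_filter_natCast_eq_sub_le {d : ℕ} [NeZero d] (t : ZMod d) (X : ℕ) :
    |(((Finset.range X).filter fun n : ℕ ↦ (n : ZMod d) = t).card : ℝ) - X / d| ≤ 1 := by
  have hmod : ∀ n : ℕ, (n : ZMod d) = t ↔ n ≡ t.val [MOD d] := fun n ↦ by
    rw [← ZMod.natCast_eq_natCast_iff, ZMod.natCast_zmod_val]
  simp only [hmod]
  rw [← Nat.count_eq_card_filter_range, Nat.count_modEq_card X (NeZero.pos d)]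
  have hlt := Nat.lt_floor_add_one ((X : ℝ) / d)
  have hle := Nat.floor_le (show 0 ≤ (X : ℝ) / d by positivity)
  rw [Nat.floor_div_eq_div] at hlt hle
  rw [abs_le]
  split_ifs <;> constructor <;> push_cast <;> linarith

theorem abs_card_filter_dvd_eval_sub_le (f : ℤ[X]) (d : ℕ) [NeZero d] (X : ℕ) :
    |(((Finset.range X).filter fun n : ℕ ↦ (d : ℤ) ∣ f.eval (n : ℤ)).card : ℝ) -
      rootDensity f d * X| ≤ d := by
  classical
  let T : Finset (ZMod d) := Finset.univ.filter fun t ↦ aeval t f = 0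
  have hT : T.card = rootCount f d := by
    rw [rootCount, Nat.card_eq_fintype_card, Fintype.card_subtype]
  have hcount : ((Finset.range X).filter fun n : ℕ ↦ (d : ℤ) ∣ f.eval (n : ℤ)).card =
      ∑ t ∈ T, ((Finset.range X).filter fun n : ℕ ↦ (n : ZMod d) = t).card := by
    simp_rw [← aeval_natCast_eq_zero_iff]
    rw [Finset.card_eq_sum_card_fiberwise (f := fun n : ℕ ↦ (n : ZMod d)) (t := T)
      fun n hn ↦ by simpa [T] using (Finset.mem_filter.1 hn).2]
    refine Finset.sum_congr rfl fun t ht ↦ ?_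
    rw [Finset.filter_filter]
    refine congrArg _ (Finset.filter_congr fun n _ ↦ and_iff_right_of_imp ?_)
    rintro rfl
    exact (Finset.mem_filter.1 ht).2
  have hmain : rootDensity f d * X = ∑ _t ∈ T, (X : ℝ) / d := by
    rw [Finset.sum_const, hT, nsmul_eq_mul, rootDensity_apply]
    ring
  rw [hcount, hmain, Nat.cast_sum, ← Finset.sum_sub_distrib]
  calc _ ≤ ∑ _t ∈ T, (1 : ℝ) := (Finset.abs_sum_le_sum_abs _ _).trans
        (Finset.sum_le_sum fun t _ ↦ abs_card_filter_natCast_eq_sub_le t X)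
    _ = rootCount f d := by simp [hT]
    _ ≤ d := mod_cast rootCount_le f d

theorem squarefree_prod_primes {P : Finset ℕ} (hP : ∀ p ∈ P, p.Prime) :
    Squarefree (∏ p ∈ P, p) :=
  Finset.squarefree_prod_of_pairwise_isCoprime
    (fun p hp q hq hpq ↦ Nat.coprime_iff_isRelPrime.1
      ((Nat.coprime_primes (hP p hp) (hP q hq)).2 hpq))
    fun p hp ↦ (hP p hp).squarefree

theorem mem_of_prime_dvd_prod {P : Finset ℕ} (hP : ∀ p ∈ P, p.Prime) {p : ℕ} (hp : p.Prime)
    (hpP : p ∣ ∏ q ∈ P, q) : p ∈ P := by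
  rw [← Nat.primeFactors_prod hP]
  exact hp.mem_primeFactors hpP (squarefree_prod_primes hP).ne_zero

theorem sum_image_ite_card_fiber {α β : Type*} [DecidableEq β] (s : Finset α) (g : α → β)
    (q : β → Prop) [DecidablePred q] :
    (∑ m ∈ s.image g, if q m then ((s.filter fun n ↦ g n = m).card : ℝ) else 0) =
      (s.filter fun n ↦ q (g n)).card := by
  rw [← Finset.sum_boole, Finset.sum_comp (fun m ↦ if q m then (1 : ℝ) else 0) g]
  simp

/-- The sieve problem of removing from `0, …, X - 1` the integers at which the polynomial `f` has
a prime divisor in `P`. The sifted values `|f n|` are weighted by their multiplicity. -/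
noncomputable def polynomialSieve (f : ℤ[X]) (X : ℕ) (P : Finset ℕ) (hP : ∀ p ∈ P, p.Prime)
    (hpos : ∀ p ∈ P, 0 < rootCount f p) (hlt : ∀ p ∈ P, rootCount f p < p) : BoundingSieve where
  support := (Finset.range X).image fun n : ℕ ↦ (f.eval (n : ℤ)).natAbs
  prodPrimes := ∏ p ∈ P, p
  prodPrimes_squarefree := squarefree_prod_primes hP
  weights m := ((Finset.range X).filter fun n : ℕ ↦ (f.eval (n : ℤ)).natAbs = m).card
  weights_nonneg _ := Nat.cast_nonneg _
  totalMass := X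
  nu := rootDensity f
  nu_mult := rootDensity_isMultiplicative f
  nu_pos_of_prime p hp hpP := by
    have hp0 : (0 : ℝ) < p := mod_cast hp.pos
    have hroot : (0 : ℝ) < rootCount f p := mod_cast hpos p (mem_of_prime_dvd_prod hP hp hpP)
    exact div_pos hroot hp0
  nu_lt_one_of_prime p hp hpP := by
    have hp0 : (0 : ℝ) < p := mod_cast hp.pos
    exact (div_lt_one hp0).2 (mod_cast hlt p (mem_of_prime_dvd_prod hP hp hpP))

variable {f : ℤ[X]} {X : ℕ} {P : Finset ℕ} {hP : ∀ p ∈ P, p.Prime}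
    {hpos : ∀ p ∈ P, 0 < rootCount f p} {hlt : ∀ p ∈ P, rootCount f p < p}

theorem siftedSum_polynomialSieve :
    siftedSum (s := polynomialSieve f X P hP hpos hlt) =
      ((Finset.range X).filter fun n : ℕ ↦ ∀ p ∈ P, ¬(p : ℤ) ∣ f.eval (n : ℤ)).card := by
  refine (sum_image_ite_card_fiber _ _ _).trans ?_
  refine congrArg _ (congrArg _ (Finset.filter_congr fun n _ ↦ ?_))
  refine Nat.coprime_prod_left_iff.trans (forall₂_congr fun p hp ↦ ?_)
  rw [(hP p hp).coprime_iff_not_dvd, Int.natCast_dvd]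

theorem abs_rem_polynomialSieve_le {d : ℕ} (hd : d ≠ 0) :
    |(rem (s := polynomialSieve f X P hP hpos hlt)) d| ≤ d := by
  have : NeZero d := ⟨hd⟩
  have hmult : multSum (s := polynomialSieve f X P hP hpos hlt) d =
      ((Finset.range X).filter fun n : ℕ ↦ (d : ℤ) ∣ f.eval (n : ℤ)).card := by
    simp_rw [Int.natCast_dvd]
    exact sum_image_ite_card_fiber _ _ _
  rw [rem, hmult]
  exact abs_card_filter_dvd_eval_sub_le f d X

theorem card_filter_forall_not_dvd_eval_le (f : ℤ[X]) (X : ℕ) {P : Finset ℕ} {R L C : ℝ}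
    (hP : ∀ p ∈ P, p.Prime) (hpos : ∀ p ∈ P, 0 < rootCount f p)
    (hhalf : ∀ p ∈ P, 2 * rootCount f p ≤ p) (hlog : ∀ p ∈ P, Real.log p ≤ L)
    (hR : 1 ≤ R) (hL : 0 < L) (hsum : ∑ p ∈ P, rootDensity f p * Real.log p ≤ C * L)
    (hRL : (4 * C + 1) * L ≤ Real.log R) :
    (((Finset.range X).filter fun n : ℕ ↦ ∀ p ∈ P, ¬(p : ℤ) ∣ f.eval (n : ℤ)).card : ℝ) ≤
      2 * X * Real.exp (-∑ p ∈ P, rootDensity f p) + R ^ 8 := by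
  have hlt : ∀ p ∈ P, rootCount f p < p := fun p hp ↦ by
    have := hpos p hp
    have := hhalf p hp
    omega
  let s := polynomialSieve f X P hP hpos hlt
  have hfactors : s.prodPrimes.primeFactors = P := Nat.primeFactors_prod hP
  rw [← siftedSum_polynomialSieve (hP := hP) (hpos := hpos) (hlt := hlt)]
  refine (siftedSum_le_mul_exp_neg_sum_nu_add (s := s) (C := C) (Nat.cast_nonneg X) hR hL
    (fun d _ ↦ inv_rootDensity_le f d)
    (fun d hd ↦ abs_rem_polynomialSieve_le (ne_zero_of_dvd_ne_zero prodPrimes_ne_zero hd))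
    ?_ ?_ ?_ hRL).trans_eq ?_ <;> rw [hfactors]
  · intro p hp
    have hp0 : (0 : ℝ) < p := mod_cast (hP p hp).pos
    have : (2 : ℝ) * rootCount f p ≤ p := mod_cast hhalf p hp
    refine (div_le_div_iff₀ hp0 two_pos).2 ?_
    linarith
  · exact hlog
  · exact hsum
  · rfl

end PolynomialSieve

section ConstantRootCount

open Polynomial Filter

theorem sum_inv_le_log_div {Q : Finset ℕ} {D : ℕ} {z : ℝ} (hz : 1 < z) (hD : D ≠ 0)
    (hQ : ∀ p ∈ Q, p.Prime ∧ z < p ∧ p ∣ D) :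
    ∑ p ∈ Q, (1 : ℝ) / p ≤ Real.log D / (z * Real.log z) := by
  have hz0 : 0 < z := zero_lt_one.trans hz
  have hlogz := Real.log_pos hz
  have hdvd : ∏ p ∈ Q, p ∣ D :=
    Finset.prod_primes_dvd D (fun p hp ↦ (hQ p hp).1.prime) fun p hp ↦ (hQ p hp).2.2
  have hpow : z ^ Q.card ≤ D := by
    calc z ^ Q.card = ∏ _p ∈ Q, z := (Finset.prod_const z).symm
      _ ≤ ∏ p ∈ Q, (p : ℝ) := Finset.prod_le_prod (fun _ _ ↦ hz0.le) fun p hp ↦ (hQ p hp).2.1.le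
      _ ≤ D := by
          rw [← Nat.cast_prod]
          exact_mod_cast Nat.le_of_dvd (Nat.pos_of_ne_zero hD) hdvd
  have hcard : Q.card * Real.log z ≤ Real.log D := by
    rw [← Real.log_pow]
    exact Real.log_le_log (pow_pos hz0 _) hpow
  calc ∑ p ∈ Q, (1 : ℝ) / p ≤ ∑ _p ∈ Q, 1 / z := by
        refine Finset.sum_le_sum fun p hp ↦ ?_
        have := (hQ p hp).2.1.le
        gcongr
    _ = Q.card * Real.log z / (z * Real.log z) := by
        rw [Finset.sum_const, nsmul_eq_mul]
        field_simp
    _ ≤ Real.log D / (z * Real.log z) := by gcongr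

theorem le_sum_primesLE_filter_inv {D : ℕ} {z w : ℝ} (hz : 3 ≤ z) (hw : 1 < w) (hD : D ≠ 0) :
    Real.log (Real.log w) - Real.log (Real.log z) - (5 + Real.log D / (z * Real.log z)) ≤
      ∑ p ∈ Nat.primesLE ⌊w⌋₊ with z < ((p : ℕ) : ℝ) ∧ ¬p ∣ D, (1 : ℝ) / p := by
  have hsmall : ∑ p ∈ Nat.primesLE ⌊w⌋₊ with ¬z < ((p : ℕ) : ℝ), (1 : ℝ) / p ≤
      Real.log (Real.log z) + 4 := by
    refine le_trans (Finset.sum_le_sum_of_subset_of_nonneg (fun p hp ↦ ?_) fun _ _ _ ↦ ?_)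
      (sum_primesLE_inv_le_log_log hz)
    · rw [Finset.mem_filter, Nat.mem_primesLE] at hp
      exact Nat.mem_primesLE.2 ⟨Nat.le_floor (not_lt.1 hp.2), hp.1.2⟩
    · positivity
  have hdvd : ∑ p ∈ Nat.primesLE ⌊w⌋₊ with z < ((p : ℕ) : ℝ) ∧ p ∣ D, (1 : ℝ) / p ≤
      Real.log D / (z * Real.log z) :=
    sum_inv_le_log_div (by linarith) hD fun p hp ↦ by
      rw [Finset.mem_filter, Nat.mem_primesLE] at hp
      exact ⟨hp.1.2, hp.2⟩
  have hall := log_log_le_sum_primesLE_inv hw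
  rw [← Finset.sum_filter_add_sum_filter_not _ fun p : ℕ ↦ z < (p : ℝ),
    ← Finset.sum_filter_add_sum_filter_not (Finset.filter _ _) fun p : ℕ ↦ p ∣ D,
    Finset.filter_filter, Finset.filter_filter] at hall
  linarith

variable {f : ℤ[X]} {κ D : ℕ}

theorem sum_rootDensity_mul_eq {P : Finset ℕ} (hP : ∀ p ∈ P, rootCount f p = κ) (g : ℕ → ℝ) :
    ∑ p ∈ P, rootDensity f p * g p = κ * ∑ p ∈ P, g p / p := by
  rw [Finset.mul_sum]
  refine Finset.sum_congr rfl fun p hp ↦ ?_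
  rw [rootDensity_apply, hP p hp]
  ring

theorem sum_log_div_le_two_mul_log {P : Finset ℕ} {w : ℝ} (hw : 4 ≤ w)
    (hP : P ⊆ Nat.primesLE ⌊w⌋₊) : ∑ p ∈ P, Real.log p / p ≤ 2 * Real.log w := by
  have hlog4 : Real.log 4 ≤ Real.log w := Real.log_le_log (by norm_num) hw
  have hfloor : Real.log ⌊w⌋₊ ≤ Real.log w :=
    Real.log_le_log (mod_cast Nat.floor_pos.2 (by linarith)) (Nat.floor_le (by linarith))
  calc ∑ p ∈ P, Real.log p / p ≤ ∑ p ∈ Nat.primesLE ⌊w⌋₊, Real.log p / p :=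
        Finset.sum_le_sum_of_subset_of_nonneg hP fun p _ _ ↦ by positivity
    _ ≤ 2 * Real.log w := by linarith [sum_primesLE_log_div_le ⌊w⌋₊]

theorem exp_neg_mul_le_of_log_sub_log_le (κ : ℕ) {x y S B : ℝ} (hx : 0 < x) (hy : 0 < y)
    (hS : Real.log y - Real.log x - B ≤ S) :
    Real.exp (-(κ * S)) ≤ Real.exp (κ * B) * (x / y) ^ κ := by
  rw [← Real.exp_log (div_pos hx hy), ← Real.exp_nat_mul, ← Real.exp_add, ← mul_add, ← mul_neg,
    Real.log_div hx.ne' hy.ne']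
  gcongr
  linarith

theorem card_filter_le_of_rootCount_eq (X : ℕ) {z w R : ℝ} (hκ : 0 < κ) (hD : D ≠ 0)
    (hf : ∀ p : ℕ, p.Prime → ¬p ∣ D → rootCount f p = κ) (hz : 3 ≤ z) (hκz : 2 * κ ≤ z)
    (hw : 4 ≤ w) (hR : 1 ≤ R) (hwR : (8 * κ + 1) * Real.log w ≤ Real.log R) :
    (((Finset.range X).filter fun n : ℕ ↦
      ∀ p ∈ Nat.primesLE ⌊w⌋₊, ¬(p : ℤ) ∣ f.eval (n : ℤ)).card : ℝ) ≤
      2 * X * (Real.exp (κ * (5 + Real.log D / (z * Real.log z))) *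
        (Real.log z / Real.log w) ^ κ) + R ^ 8 := by
  have hlogw : 0 < Real.log w := Real.log_pos (by linarith)
  have hlogz : 0 < Real.log z := Real.log_pos (by linarith)
  set P := (Nat.primesLE ⌊w⌋₊).filter fun p : ℕ ↦ z < (p : ℝ) ∧ ¬p ∣ D with hP
  have hmem : ∀ p ∈ P, ((p : ℝ) ≤ w ∧ p.Prime) ∧ z < p ∧ ¬p ∣ D := fun p hp ↦ by
    rwa [hP, Finset.mem_filter, Nat.mem_primesLE, Nat.le_floor_iff (by linarith)] at hp
  have hroot : ∀ p ∈ P, rootCount f p = κ := fun p hp ↦ hf p (hmem p hp).1.2 (hmem p hp).2.2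
  have hsieve := card_filter_forall_not_dvd_eval_le f X (P := P) (L := Real.log w) (C := 2 * κ)
    (fun p hp ↦ (hmem p hp).1.2) (fun p hp ↦ (hroot p hp).symm ▸ hκ)
    (fun p hp ↦ by rw [hroot p hp]; exact_mod_cast hκz.trans (hmem p hp).2.1.le)
    (fun p hp ↦ Real.log_le_log (mod_cast (hmem p hp).1.2.pos) (hmem p hp).1.1)
    hR hlogw ?_ (by linarith)
  · have hexp : Real.exp (-∑ p ∈ P, rootDensity f p) ≤
        Real.exp (κ * (5 + Real.log D / (z * Real.log z))) * (Real.log z / Real.log w) ^ κ := by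
      have hdensity := sum_rootDensity_mul_eq hroot fun _ ↦ 1
      simp only [mul_one] at hdensity
      rw [hdensity]
      exact exp_neg_mul_le_of_log_sub_log_le κ hlogz hlogw
        (le_sum_primesLE_filter_inv hz (by linarith) hD)
    have hsub : ((Finset.range X).filter fun n : ℕ ↦
        ∀ p ∈ Nat.primesLE ⌊w⌋₊, ¬(p : ℤ) ∣ f.eval (n : ℤ)).card ≤
        ((Finset.range X).filter fun n : ℕ ↦ ∀ p ∈ P, ¬(p : ℤ) ∣ f.eval (n : ℤ)).card :=
      Finset.card_le_card (Finset.monotone_filter_right _ fun n _ h p hp ↦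
        h p (Finset.mem_of_mem_filter p hp))
    calc _ ≤ _ := (Nat.cast_le (α := ℝ)).2 hsub
      _ ≤ _ := hsieve
      _ ≤ _ := by gcongr
  · rw [sum_rootDensity_mul_eq hroot]
    have := sum_log_div_le_two_mul_log hw (Finset.filter_subset _ _ : P ⊆ _)
    calc κ * ∑ p ∈ P, Real.log p / p ≤ κ * (2 * Real.log w) := by gcongr
      _ = 2 * κ * Real.log w := by ring

theorem eventually_sieve_parameters (κ : ℕ) {δ : ℝ} (hδ : 0 < δ) :
    ∀ᶠ N : ℕ in atTop, 4 ≤ (N : ℝ) ^ δ ∧ 9 ≤ Real.log N ∧ 1 ≤ Real.log (Real.log N / 3) ∧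
      2 * κ ≤ Real.log N / 3 ∧ Real.log N ^ κ ≤ (N : ℝ) ^ (1 / 4 : ℝ) := by
  have hcast : Tendsto (fun N : ℕ ↦ (N : ℝ)) atTop atTop := tendsto_natCast_atTop_atTop
  have hlog := Real.tendsto_log_atTop.comp hcast
  have hlog3 := hlog.atTop_div_const three_pos
  have hlittle := ((isLittleO_log_rpow_rpow_atTop (κ : ℝ)
    (by norm_num : (0 : ℝ) < 1 / 4)).comp_tendsto hcast).bound one_pos
  filter_upwards [((tendsto_rpow_atTop hδ).comp hcast).eventually_ge_atTop 4,
    hlog.eventually_ge_atTop 9, (Real.tendsto_log_atTop.comp hlog3).eventually_ge_atTop 1,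
    hlog3.eventually_ge_atTop (2 * κ), hlittle] with N h₁ h₂ h₃ h₄ h₅
  refine ⟨h₁, h₂, h₃, h₄, ?_⟩
  simpa [Real.rpow_natCast, abs_of_nonneg, Real.log_natCast_nonneg, Real.rpow_nonneg] using h₅

theorem rpow_quarter_le_div_pow_mul {κ N X : ℕ} {y : ℝ} (hN : 1 < N) (hNX : N ≤ X ^ 2)
    (hy : 1 ≤ y) (hpow : Real.log N ^ κ ≤ (N : ℝ) ^ (1 / 4 : ℝ)) :
    (N : ℝ) ^ (1 / 4 : ℝ) ≤ (y / Real.log N) ^ κ * X := by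
  have hlog : 0 < Real.log N := Real.log_pos (mod_cast hN)
  have hsqrt : (N : ℝ) ^ (1 / 2 : ℝ) ≤ X := by
    rw [← Real.sqrt_eq_rpow]
    exact Real.sqrt_le_iff.2 ⟨Nat.cast_nonneg X, mod_cast hNX⟩
  rw [div_pow, div_mul_eq_mul_div, le_div_iff₀ (pow_pos hlog κ)]
  calc (N : ℝ) ^ (1 / 4 : ℝ) * Real.log N ^ κ ≤ (N : ℝ) ^ (1 / 4 : ℝ) * (N : ℝ) ^ (1 / 4 : ℝ) := by
        gcongr
    _ = (N : ℝ) ^ (1 / 2 : ℝ) := by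
        rw [← Real.rpow_add (by positivity)]
        norm_num
    _ ≤ y ^ κ * X := by
        have := one_le_pow₀ hy (n := κ)
        nlinarith

theorem log_div_log_mul_le {D N : ℕ} {K y : ℝ} (hN : 1 < N) (hDK : Real.log D ≤ K * Real.log N)
    (hy : 1 ≤ y) : Real.log D / (Real.log N / 3 * y) ≤ 3 * K := by
  have hlog : 0 < Real.log N := Real.log_pos (mod_cast hN)
  have hK : 0 ≤ K := nonneg_of_mul_nonneg_left ((Real.log_natCast_nonneg D).trans hDK) hlog
  rw [div_le_iff₀ (by positivity)]
  calc Real.log D ≤ K * Real.log N * 1 := by rwa [mul_one]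
    _ ≤ K * Real.log N * y := by gcongr
    _ = 3 * K * (Real.log N / 3 * y) := by ring

theorem card_filter_primesLE_not_dvd_antitone (X : ℕ) (F : ℕ → ℤ) :
    Antitone fun m ↦ ((Finset.range X).filter fun n ↦
      ∀ p ∈ Nat.primesLE m, ¬(p : ℤ) ∣ F n).card := fun _ _ h ↦
  Finset.card_le_card (Finset.monotone_filter_right _ fun _ _ hn p hp ↦
    hn p (Nat.primesLE_mono h hp))

theorem exists_forall_card_filter_le_of_rootCount_eq_of_mul_le {κ : ℕ} (hκ : 0 < κ) {δ : ℝ}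
    (hδ : 0 < δ) (hδκ : (8 * κ + 1) * δ ≤ 1 / 32) (K : ℝ) :
    ∃ (c : ℝ) (N₀ : ℕ), 0 < c ∧ ∀ N ≥ N₀, ∀ X : ℕ, N ≤ X ^ 2 → ∀ (f : ℤ[X]) (D : ℕ), D ≠ 0 →
      Real.log D ≤ K * Real.log N → (∀ p : ℕ, p.Prime → ¬p ∣ D → rootCount f p = κ) →
      (((Finset.range X).filter fun n : ℕ ↦
        ∀ p ∈ Nat.primesLE ⌊(N : ℝ) ^ δ⌋₊, ¬(p : ℤ) ∣ f.eval (n : ℤ)).card : ℝ) ≤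
      c * (Real.log (Real.log N / 3) / Real.log N) ^ κ * X := by
  obtain ⟨N₀, hN₀⟩ := eventually_atTop.1 (eventually_sieve_parameters κ hδ)
  refine ⟨2 * Real.exp (κ * (5 + 3 * K)) / δ ^ κ + 1, max N₀ 2, by positivity, ?_⟩
  intro N hN X hNX f D hD hDK hf
  have hN1 : 1 < N := le_of_max_le_right hN
  obtain ⟨hw, hlog, hloglog, hκz, hpow⟩ := hN₀ N (le_of_max_le_left hN)
  have hN0 : (0 : ℝ) < N := mod_cast zero_lt_one.trans hN1
  set y := Real.log (Real.log N / 3)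
  have hsieve := card_filter_le_of_rootCount_eq X (R := (N : ℝ) ^ (1 / 32 : ℝ)) hκ hD hf
    (by linarith) hκz hw (Real.one_le_rpow (mod_cast hN1.le) (by norm_num)) (by
      rw [Real.log_rpow hN0, Real.log_rpow hN0, ← mul_assoc]
      gcongr)
  have hR : ((N : ℝ) ^ (1 / 32 : ℝ)) ^ 8 ≤ (y / Real.log N) ^ κ * X := by
    rw [← Real.rpow_mul_natCast hN0.le]
    norm_num
    exact rpow_quarter_le_div_pow_mul hN1 hNX hloglog hpow
  calc _ ≤ _ := hsieve
    _ ≤ 2 * X * (Real.exp (κ * (5 + 3 * K)) * (y / (δ * Real.log N)) ^ κ) +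
          (y / Real.log N) ^ κ * X := by
        rw [Real.log_rpow hN0]
        gcongr
        exact log_div_log_mul_le hN1 hDK hloglog
    _ = _ := by
        rw [div_mul_eq_div_div_swap, div_pow _ δ]
        ring

theorem exists_forall_card_filter_le_of_rootCount_eq {κ : ℕ} (hκ : 0 < κ) {θ : ℝ} (hθ : 0 < θ)
    (K : ℝ) :
    ∃ (c : ℝ) (N₀ : ℕ), 0 < c ∧ ∀ N ≥ N₀, ∀ X : ℕ, N ≤ X ^ 2 → ∀ (f : ℤ[X]) (D : ℕ), D ≠ 0 →
      Real.log D ≤ K * Real.log N → (∀ p : ℕ, p.Prime → ¬p ∣ D → rootCount f p = κ) →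
      (((Finset.range X).filter fun n : ℕ ↦
        ∀ p ∈ Nat.primesLE ⌊(N : ℝ) ^ θ⌋₊, ¬(p : ℤ) ∣ f.eval (n : ℤ)).card : ℝ) ≤
      c * (Real.log (Real.log N / 3) / Real.log N) ^ κ * X := by
  set δ := min θ (1 / (32 * (8 * κ + 1)))
  have hδκ : (8 * κ + 1) * δ ≤ 1 / 32 := by
    calc (8 * κ + 1) * δ ≤ (8 * κ + 1) * (1 / (32 * (8 * κ + 1))) := by
          gcongr
          exact min_le_right _ _
      _ = 1 / 32 := by field_simp
  obtain ⟨c, N₀, hc, hbound⟩ := exists_forall_card_filter_le_of_rootCount_eq_of_mul_le hκ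
    (lt_min hθ (by positivity) : 0 < δ) hδκ K
  refine ⟨c, max N₀ 1, hc, fun N hN X hNX f D hD hDK hf ↦ ?_⟩
  have hfloor : ⌊(N : ℝ) ^ δ⌋₊ ≤ ⌊(N : ℝ) ^ θ⌋₊ := Nat.floor_mono
    (Real.rpow_le_rpow_of_exponent_le (Nat.one_le_cast.2 (le_of_max_le_right hN))
      (min_le_left _ _))
  exact (Nat.cast_le.2 (card_filter_primesLE_not_dvd_antitone X (fun n ↦ f.eval (n : ℤ))
    hfloor)).trans (hbound N (le_of_max_le_left hN) X hNX f D hD hDK hf)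

end ConstantRootCount

section LinearForms

open Polynomial

variable {ι : Type*} [Fintype ι]

/-- The product of the linear forms `a i * X + b i`. -/
noncomputable def linearFormsPoly (a b : ι → ℤ) : ℤ[X] := ∏ i, (C (a i) * X + C (b i))

theorem eval_linearFormsPoly (a b : ι → ℤ) (n : ℤ) :
    (linearFormsPoly a b).eval n = ∏ i, (a i * n + b i) := by
  simp [linearFormsPoly, eval_prod]

theorem aeval_linearFormsPoly_eq_zero_iff {K : Type*} [Field K] {a : ι → ℤ}
    (ha : ∀ i, (a i : K) ≠ 0) (b : ι → ℤ) (t : K) :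
    aeval t (linearFormsPoly a b) = 0 ↔ ∃ i, -(b i : K) / a i = t := by
  simp only [linearFormsPoly, map_prod, Finset.prod_eq_zero_iff, Finset.mem_univ, true_and,
    map_add, map_mul, aeval_X, eq_intCast, map_intCast]
  refine exists_congr fun i ↦ ?_
  rw [div_eq_iff (ha i), neg_eq_iff_add_eq_zero, add_comm, mul_comm]

variable [DecidableEq ι]

/-- The discriminant `Δ(F)` of the product `F` of the linear forms `a i * X + b i`. -/
def linearFormsDisc (a b : ι → ℤ) : ℤ :=
  (∏ i, a i) * ∏ i, ∏ j ∈ Finset.univ.filter (fun j ↦ j ≠ i), (a i * b j - b i * a j)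

theorem linearFormsDisc_ne_zero_iff {a b : ι → ℤ} :
    linearFormsDisc a b ≠ 0 ↔
      (∀ i, a i ≠ 0) ∧ ∀ i j, j ≠ i → a i * b j - b i * a j ≠ 0 := by
  simp only [linearFormsDisc, mul_ne_zero_iff, Finset.prod_ne_zero_iff, Finset.mem_univ,
    Finset.mem_filter, true_and, forall_const]

theorem dvd_linearFormsDisc (a b : ι → ℤ) (i : ι) : a i ∣ linearFormsDisc a b :=
  (Finset.dvd_prod_of_mem a (Finset.mem_univ i)).mul_right _

theorem sub_dvd_linearFormsDisc (a b : ι → ℤ) {i j : ι} (hij : j ≠ i) :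
    a i * b j - b i * a j ∣ linearFormsDisc a b := by
  have hj : a i * b j - b i * a j ∣
      ∏ j ∈ Finset.univ.filter (fun j ↦ j ≠ i), (a i * b j - b i * a j) :=
    Finset.dvd_prod_of_mem (fun j ↦ a i * b j - b i * a j) (by simpa using hij)
  exact (hj.trans (Finset.dvd_prod_of_mem (fun i ↦
    ∏ j ∈ Finset.univ.filter (fun j ↦ j ≠ i), (a i * b j - b i * a j))
      (Finset.mem_univ i))).mul_left _

theorem rootCount_linearFormsPoly {a b : ι → ℤ} {p : ℕ} (hp : p.Prime)
    (hdvd : ¬(p : ℤ) ∣ linearFormsDisc a b) :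
    rootCount (linearFormsPoly a b) p = Fintype.card ι := by
  have := Fact.mk hp
  have hne : ∀ {m : ℤ}, m ∣ linearFormsDisc a b → (m : ZMod p) ≠ 0 := fun hm h ↦
    hdvd (((ZMod.intCast_zmod_eq_zero_iff_dvd _ p).1 h).trans hm)
  have ha : ∀ i, (a i : ZMod p) ≠ 0 := fun i ↦ hne (dvd_linearFormsDisc a b i)
  have hinj : Function.Injective fun i ↦ -(b i : ZMod p) / a i := fun i j hij ↦ by
    by_contra h
    apply hne (sub_dvd_linearFormsDisc a b (Ne.symm h))
    rw [div_eq_div_iff (ha i) (ha j)] at hij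
    push_cast
    linear_combination hij
  have hroots : {t : ZMod p | aeval t (linearFormsPoly a b) = 0} =
      Set.range fun i ↦ -(b i : ZMod p) / a i :=
    Set.ext fun t ↦ aeval_linearFormsPoly_eq_zero_iff ha b t
  calc rootCount (linearFormsPoly a b) p
      = Nat.card {t : ZMod p | aeval t (linearFormsPoly a b) = 0} := rfl
    _ = Fintype.card ι := by
        rw [hroots, Nat.card_range_of_injective hinj, Nat.card_eq_fintype_card]

theorem natAbs_linearFormsDisc_le {a b : ι → ℤ} {Y : ℕ} (hY : 1 ≤ Y) (ha : ∀ i, (a i).natAbs ≤ Y)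
    (hab : ∀ i j, (a i * b j - b i * a j).natAbs ≤ Y) :
    (linearFormsDisc a b).natAbs ≤ Y ^ (Fintype.card ι + Fintype.card ι ^ 2) := by
  have hprod : ∀ (s : Finset ι) (f : ι → ℤ),
      (∏ i ∈ s, f i).natAbs = ∏ i ∈ s, (f i).natAbs := fun s f ↦ map_prod Int.natAbsHom f s
  rw [linearFormsDisc, Int.natAbs_mul, hprod, hprod, pow_add, sq, pow_mul, ← Finset.card_univ]
  refine Nat.mul_le_mul (Finset.prod_le_pow_card _ _ _ fun i _ ↦ ha i)
    (Finset.prod_le_pow_card _ _ _ fun i _ ↦ ?_)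
  calc _ = ∏ j ∈ Finset.univ.filter (fun j ↦ j ≠ i), (a i * b j - b i * a j).natAbs := hprod _ _
    _ ≤ Y ^ (Finset.univ.filter fun j ↦ j ≠ i).card :=
        Finset.prod_le_pow_card _ _ _ fun j _ ↦ hab i j
    _ ≤ Y ^ (Finset.univ : Finset ι).card :=
        Nat.pow_le_pow_right hY (Finset.card_filter_le _ _)

end LinearForms

section Translates

open Polynomial

variable {ι τ : Type*}

/-- The leading coefficients of the linear forms `a u * (B + (X + g i) * M) + b u`, indexed by the
pairs `(u, i)`. -/
def translateLeading (a : ι → ℤ) (M : ℕ) (j : ι × τ) : ℤ := a j.1 * M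

/-- The constant coefficients of the linear forms `a u * (B + (X + g i) * M) + b u`, indexed by the
pairs `(u, i)`. -/
def translateConst (a b : ι → ℤ) (B M : ℕ) (g : τ → ℤ) (j : ι × τ) : ℤ :=
  a j.1 * (B + g j.2 * M) + b j.1

theorem translateLeading_mul_translateConst_sub (a b : ι → ℤ) (B M : ℕ) (g : τ → ℤ)
    (j j' : ι × τ) :
    translateLeading a M j * translateConst a b B M g j' -
        translateConst a b B M g j * translateLeading a M j' =
      M * (a j.1 * a j'.1 * M * (g j'.2 - g j.2) + (a j.1 * b j'.1 - b j.1 * a j'.1)) := by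
  simp only [translateLeading, translateConst]
  ring

theorem exists_natAbs_le [Finite ι] (a b : ι → ℤ) :
    ∃ H > 0, (∀ i, (a i).natAbs ≤ H) ∧ ∀ i, (b i).natAbs ≤ H := by
  obtain ⟨H, hH⟩ := (Set.finite_range fun i ↦ max (a i).natAbs (b i).natAbs).bddAbove
  have hmax : ∀ i, max (a i).natAbs (b i).natAbs ≤ H + 1 := fun i ↦
    (hH (Set.mem_range_self i)).trans H.le_succ
  exact ⟨H + 1, H.succ_pos, fun i ↦ le_of_max_le_left (hmax i),
    fun i ↦ le_of_max_le_right (hmax i)⟩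

variable [Fintype ι] [Fintype τ]

theorem eval_linearFormsPoly_translate (a b : ι → ℤ) (B M : ℕ) (g : τ → ℤ) (n : ℤ) :
    (linearFormsPoly (translateLeading a M) (translateConst a b B M g)).eval n =
      ∏ i, (linearFormsPoly a b).eval (B + (n + g i) * M) := by
  simp only [eval_linearFormsPoly, Fintype.prod_prod_type_right, translateLeading, translateConst]
  exact Finset.prod_congr rfl fun i _ ↦ Finset.prod_congr rfl fun u _ ↦ by ring

theorem prod_linearForms_root_eq_zero {a : ι → ℤ} (b : ι → ℤ) (B : ℕ) {M : ℕ} (hM : M ≠ 0) {v : ι}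
    (hv : a v ≠ 0) :
    ∏ u, ((a u : ℚ) * (B + M * ((-b v / a v - B) / M)) + b u) = 0 := by
  refine Finset.prod_eq_zero (Finset.mem_univ v) ?_
  have : (a v : ℚ) ≠ 0 := mod_cast hv
  field_simp
  ring

variable [DecidableEq ι] [DecidableEq τ]

theorem linearFormsDisc_translate_ne_zero {a b : ι → ℤ} (hdisc : linearFormsDisc a b ≠ 0)
    {B M : ℕ} (hM : M ≠ 0) {g : τ → ℤ}
    (hroot : ∀ i j, i ≠ j → ∀ s s' : ℚ,
      (∏ u, ((a u : ℚ) * (B + M * s) + b u)) = 0 → (∏ u, ((a u : ℚ) * (B + M * s') + b u)) = 0 →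
      ((g i - g j : ℤ) : ℚ) ≠ s - s') :
    linearFormsDisc (translateLeading a M) (translateConst a b B M g) ≠ 0 := by
  obtain ⟨ha, hab⟩ := linearFormsDisc_ne_zero_iff.1 hdisc
  refine linearFormsDisc_ne_zero_iff.2 ⟨fun j ↦ mul_ne_zero (ha j.1) (mod_cast hM), ?_⟩
  rintro ⟨u, i⟩ ⟨v, i'⟩ hne
  rw [translateLeading_mul_translateConst_sub]
  refine mul_ne_zero (mod_cast hM) ?_
  rcases eq_or_ne i i' with rfl | hi
  · simpa using hab u v (by simpa using hne)
  · intro hcross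
    refine hroot i i' hi _ _ (prod_linearForms_root_eq_zero b B hM (ha u))
      (prod_linearForms_root_eq_zero b B hM (ha v)) ?_
    have hu : (a u : ℚ) ≠ 0 := mod_cast ha u
    have hv : (a v : ℚ) ≠ 0 := mod_cast ha v
    have hMq : (M : ℚ) ≠ 0 := mod_cast hM
    have hcross' : (a u : ℚ) * a v * M * (g i' - g i) + (a u * b v - b u * a v) = 0 := by
      exact_mod_cast hcross
    push_cast
    field_simp
    linear_combination -hcross'

theorem natAbs_linearFormsDisc_translate_le {a b : ι → ℤ} {g : τ → ℤ} {H L M : ℕ} (hH : 0 < H)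
    (hL : 0 < L) (hM : 0 < M) (ha : ∀ u, (a u).natAbs ≤ H) (hb : ∀ u, (b u).natAbs ≤ H)
    (hg : ∀ i j, (g i - g j).natAbs ≤ 2 * L) (B : ℕ) :
    (linearFormsDisc (translateLeading a M) (translateConst a b B M g)).natAbs ≤
      (4 * H ^ 2 * M ^ 2 * L) ^ (Fintype.card (ι × τ) + Fintype.card (ι × τ) ^ 2) := by
  have hML : 0 < M * L := Nat.mul_pos hM hL
  refine natAbs_linearFormsDisc_le (Nat.succ_le_of_lt (by positivity)) (fun j ↦ ?_) fun j j' ↦ ?_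
  · calc (a j.1 * M).natAbs = (a j.1).natAbs * M := by rw [Int.natAbs_mul, Int.natAbs_natCast]
      _ ≤ H * M := Nat.mul_le_mul_right M (ha _)
      _ ≤ H * M * (4 * H * (M * L)) := Nat.le_mul_of_pos_right _ (by positivity)
      _ = 4 * H ^ 2 * M ^ 2 * L := by ring
  · have hmul : ∀ x y : ℤ, x.natAbs ≤ H → y.natAbs ≤ H → (x * y).natAbs ≤ H * H :=
      fun x y hx hy ↦ (Int.natAbs_mul x y).trans_le (Nat.mul_le_mul hx hy)
    have hshift : (a j.1 * a j'.1 * M * (g j'.2 - g j.2)).natAbs ≤ H * H * M * (2 * L) := by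
      rw [Int.natAbs_mul, Int.natAbs_mul, Int.natAbs_natCast]
      exact Nat.mul_le_mul (Nat.mul_le_mul_right M (hmul _ _ (ha _) (ha _))) (hg _ _)
    have hconst : (a j.1 * b j'.1 - b j.1 * a j'.1).natAbs ≤ H * H + H * H :=
      (Int.natAbs_sub_le _ _).trans
        (Nat.add_le_add (hmul _ _ (ha _) (hb _)) (hmul _ _ (hb _) (ha _)))
    rw [translateLeading_mul_translateConst_sub, Int.natAbs_mul, Int.natAbs_natCast]
    calc _ ≤ M * (H * H * M * (2 * L) + (H * H + H * H)) :=
          Nat.mul_le_mul_left M ((Int.natAbs_add_le _ _).trans (Nat.add_le_add hshift hconst))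
      _ ≤ M * (H * H * M * (2 * L) + (H * H + H * H) * (M * L)) := by
          gcongr
          exact Nat.le_mul_of_pos_right _ hML
      _ = 4 * H ^ 2 * M ^ 2 * L := by ring

theorem log_natAbs_linearFormsDisc_translate_le {a b : ι → ℤ} {H N M C : ℕ} (hH : 0 < H)
    (hM : 0 < M) (hHN : 4 * H ^ 2 ≤ N) (hMN : M ^ 2 ≤ N) (ha : ∀ u, (a u).natAbs ≤ H)
    (hb : ∀ u, (b u).natAbs ≤ H) {h : τ → ℤ} (hh : ∀ i, |h i| ≤ (N : ℤ) ^ C) (B : ℕ) (i₀ : τ) :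
    Real.log (linearFormsDisc (translateLeading a M)
        (translateConst a b B M fun i ↦ h i₀ - h i)).natAbs ≤
      (C + 2) * (Fintype.card (ι × τ) + Fintype.card (ι × τ) ^ 2) * Real.log N := by
  set κ := Fintype.card (ι × τ)
  have hN : 0 < N := (pow_pos hM 2).trans_le hMN
  have hg : ∀ i j, (h i₀ - h i - (h i₀ - h j)).natAbs ≤ 2 * N ^ C := fun i j ↦ by
    zify
    rw [sub_sub_sub_cancel_left]
    exact (abs_sub _ _).trans (by linarith [hh i, hh j])
  have hdisc := natAbs_linearFormsDisc_translate_le hH (pow_pos hN C) hM ha hb hg B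
  rcases (linearFormsDisc (translateLeading a M)
    (translateConst a b B M fun i ↦ h i₀ - h i)).natAbs.eq_zero_or_pos with h0 | hpos
  · rw [h0, Nat.cast_zero, Real.log_zero]
    have := Real.log_natCast_nonneg N
    positivity
  calc _ ≤ Real.log (((N ^ (C + 2)) ^ (κ + κ ^ 2) : ℕ) : ℝ) := by
        refine Real.log_le_log (mod_cast hpos) (Nat.cast_le.2 (hdisc.trans ?_))
        gcongr
        calc 4 * H ^ 2 * M ^ 2 * N ^ C ≤ N * N * N ^ C := by gcongr
          _ = N ^ (C + 2) := by ring
    _ = _ := by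
        push_cast
        rw [Real.log_pow, Real.log_pow]
        push_cast
        ring

end Translates

section SiftedSets

theorem primor_pos (z : ℝ) : 0 < primor z :=
  Finset.prod_pos fun _ hp ↦ (Finset.mem_filter.1 hp).2.pos

theorem dvd_primor {p : ℕ} {z : ℝ} (hp : p ∈ Nat.primesLE ⌊z⌋₊) : p ∣ primor z := by
  obtain ⟨hpz, hprime⟩ := Nat.mem_primesLE.1 hp
  exact Finset.dvd_prod_of_mem _ (Finset.mem_filter.2 ⟨Finset.mem_range_succ_iff.2 hpz, hprime⟩)

theorem primor_log_div_three_sq_le {N : ℕ} (hN : 0 < N) : primor (Real.log N / 3) ^ 2 ≤ N := by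
  have hN0 : (0 : ℝ) < N := mod_cast hN
  have hlog4 : Real.log 4 * 2 ≤ 3 := by
    rw [show (4 : ℝ) = 2 ^ 2 by norm_num, Real.log_pow, Nat.cast_ofNat]
    linarith [Real.log_two_lt_d9]
  have hfloor : (⌊Real.log N / 3⌋₊ : ℝ) ≤ Real.log N / 3 :=
    Nat.floor_le (div_nonneg (Real.log_natCast_nonneg N) zero_le_three)
  suffices ((primor (Real.log N / 3) : ℝ)) ^ 2 ≤ N from mod_cast this
  calc (primor (Real.log N / 3) : ℝ) ^ 2 ≤ ((4 : ℝ) ^ ⌊Real.log N / 3⌋₊) ^ 2 := by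
        gcongr
        exact_mod_cast primorial_le_four_pow ⌊Real.log N / 3⌋₊
    _ = Real.exp (Real.log 4 * 2 * ⌊Real.log N / 3⌋₊) := by
        rw [← pow_mul, ← Real.exp_log (show (0 : ℝ) < 4 by norm_num), ← Real.exp_nat_mul,
          Real.log_exp]
        push_cast
        ring_nf
    _ ≤ Real.exp (3 * (Real.log N / 3)) := by gcongr
    _ = N := by rw [mul_div_cancel₀ _ three_ne_zero, Real.exp_log hN0]

theorem not_dvd_of_mem_SFset {F : ℤ → ℤ} {N n p : ℕ} {z : ℝ} (hn : n ∈ SFset F N z)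
    (hp : p ∈ Nat.primesLE ⌊z⌋₊) : ¬(p : ℤ) ∣ F n := fun h ↦ by
  have hgcd := Int.dvd_coe_gcd h (Int.natCast_dvd_natCast.2 (dvd_primor hp))
  rw [(Finset.mem_filter.1 hn).2, Int.natCast_dvd_natCast] at hgcd
  exact (Nat.mem_primesLE.1 hp).2.one_lt.ne' (Nat.dvd_one.1 hgcd)

theorem ncard_inter_translates_le {τ : Type*} [Fintype τ] {F : ℤ → ℤ} {A : Finset ℕ} {N M : ℕ}
    {z : ℝ} (hM : 0 < M) (hA : A ⊆ SFset F N z) (B : ℕ) (h : τ → ℤ) (i₀ : τ) :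
    Set.ncard {x : ℤ | ∀ i, ∃ n ∈ Abset A N M B, x = (n : ℤ) + h i} ≤
      ((Finset.range (N / M + 1)).filter fun n : ℕ ↦ ∀ p ∈ Nat.primesLE ⌊z⌋₊,
        ¬(p : ℤ) ∣ ∏ i, F (B + (n + (h i₀ - h i)) * M)).card := by
  have hmem : ∀ {n : ℕ}, n ∈ Abset A N M B → B + n * M ∈ SFset F N z :=
    fun hn ↦ hA (Finset.mem_filter.1 hn).2
  refine le_trans ?_ (Finset.card_image_le (f := fun n : ℕ ↦ (n : ℤ) + h i₀))
  rw [← Set.ncard_coe_finset]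
  refine Set.ncard_le_ncard (fun x hx ↦ ?_) (Finset.finite_toSet _)
  obtain ⟨n, hn, hxn⟩ := hx i₀
  refine Finset.mem_image.2 ⟨n, Finset.mem_filter.2 ⟨?_, fun p hp hdvd ↦ ?_⟩, hxn.symm⟩
  · have hle : B + n * M ≤ N := (Finset.mem_Icc.1 (Finset.mem_filter.1 (hmem hn)).1).2
    exact Finset.mem_range_succ_iff.2 ((Nat.le_div_iff_mul_le hM).2 (by omega))
  · have hprime := Nat.prime_iff_prime_int.1 (Nat.mem_primesLE.1 hp).2
    obtain ⟨i, -, hi⟩ := (hprime.dvd_finsetProd_iff _).1 hdvd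
    obtain ⟨m, hm, hxm⟩ := hx i
    refine not_dvd_of_mem_SFset (hmem hm) hp ?_
    rwa [Nat.cast_add, Nat.cast_mul, show (m : ℤ) = n + (h i₀ - h i) by linarith]

theorem le_div_add_one_sq {N M : ℕ} (hM : 0 < M) (hMN : M ^ 2 ≤ N) : N ≤ (N / M + 1) ^ 2 := by
  have hlt : N < M * (N / M + 1) := Nat.lt_mul_div_succ N hM
  have hle : M ≤ N / M + 1 := (Nat.le_div_iff_mul_le hM).2 (by rwa [← sq]) |>.trans (Nat.le_succ _)
  calc N ≤ M * (N / M + 1) := hlt.le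
    _ ≤ (N / M + 1) ^ 2 := by
        rw [sq]
        gcongr

theorem cast_div_add_one_le {N M : ℕ} (hM : 0 < M) (hMN : M ≤ N) :
    ((N / M + 1 : ℕ) : ℝ) ≤ 2 * (N / M) := by
  have hone : (1 : ℝ) ≤ N / M := (one_le_div (mod_cast hM)).2 (mod_cast hMN)
  rw [Nat.cast_add_one]
  linarith [Nat.cast_div_le (α := ℝ) (m := N) (n := M)]

end SiftedSets

theorem stmt3_general {ι τ : Type*} [Fintype ι] [Fintype τ] [DecidableEq ι] [Nonempty ι]
    [Nonempty τ] (a b : ι → ℤ) (hdisc : linearFormsDisc a b ≠ 0) {θ : ℝ} (hθ : 0 < θ)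
    (C : ℕ) :
    ∃ (c : ℝ) (N₀ : ℕ), 0 < c ∧ ∀ N ≥ N₀, ∀ M > 0, M ^ 2 ≤ N →
      ∀ A ⊆ SFset (fun n ↦ (linearFormsPoly a b).eval n) N ((N : ℝ) ^ θ), ∀ (B : ℕ) (h : τ → ℤ),
        (∀ i, |h i| ≤ (N : ℤ) ^ C) →
        (∀ i j, i ≠ j → ∀ s s' : ℚ,
          (∏ u, ((a u : ℚ) * (B + M * s) + b u)) = 0 →
          (∏ u, ((a u : ℚ) * (B + M * s') + b u)) = 0 → ((h i - h j : ℤ) : ℚ) ≠ s - s') →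
        (Set.ncard {x : ℤ | ∀ i, ∃ n ∈ Abset A N M B, x = (n : ℤ) + h i} : ℝ) ≤
          c * Real.log (Real.log N / 3) ^ Fintype.card (ι × τ) /
            Real.log N ^ Fintype.card (ι × τ) * N / M := by
  classical
  set κ := Fintype.card (ι × τ)
  obtain ⟨H, hH, ha, hb⟩ := exists_natAbs_le a b
  obtain ⟨c, N₀, hc, hsieve⟩ := exists_forall_card_filter_le_of_rootCount_eq (κ := κ)
    Fintype.card_pos hθ ((C + 2) * (κ + κ ^ 2))
  obtain ⟨i₀⟩ := ‹Nonempty τ›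
  refine ⟨2 * c, max N₀ (4 * H ^ 2), by positivity, ?_⟩
  intro N hN M hM hMN A hA B h hh hroot
  set g : τ → ℤ := fun i ↦ h i₀ - h i with hg
  have hdisc' : linearFormsDisc (translateLeading a M) (translateConst a b B M g) ≠ 0 := by
    refine linearFormsDisc_translate_ne_zero hdisc hM.ne' fun i j hij s s' hs hs' ↦ ?_
    rw [hg, sub_sub_sub_cancel_left]
    exact hroot j i hij.symm s s' hs hs'
  have hcount := hsieve N (le_of_max_le_left hN) (N / M + 1) (le_div_add_one_sq hM hMN)
    (linearFormsPoly (translateLeading a M) (translateConst a b B M g)) _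
    (Int.natAbs_ne_zero.2 hdisc')
    (log_natAbs_linearFormsDisc_translate_le hH hM (le_of_max_le_right hN) hMN ha hb hh B i₀)
    fun p hp hpdvd ↦ rootCount_linearFormsPoly hp (mt Int.natCast_dvd.1 hpdvd)
  simp only [eval_linearFormsPoly_translate] at hcount
  have hnonneg : 0 ≤ c * (Real.log (Real.log N / 3) / Real.log N) ^ κ :=
    nonneg_of_mul_nonneg_left ((Nat.cast_nonneg _).trans hcount) (mod_cast Nat.succ_pos _)
  have hMN' : M ≤ N := (Nat.le_self_pow two_ne_zero M).trans hMN
  calc _ ≤ _ := Nat.cast_le.2 (ncard_inter_translates_le hM hA B h i₀)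
    _ ≤ c * (Real.log (Real.log N / 3) / Real.log N) ^ κ * (N / M + 1 : ℕ) := hcount
    _ ≤ c * (Real.log (Real.log N / 3) / Real.log N) ^ κ * (2 * (N / M)) :=
        mul_le_mul_of_nonneg_left (cast_div_add_one_le hM hMN') hnonneg
    _ = _ := by
        rw [div_pow]
        ring

theorem stmt3
    (k : ℕ) (hk : 1 ≤ k) (a b : Fin k → ℤ) (ha : ∀ i, a i ≠ 0)
    (F : ℤ → ℤ) (hF : ∀ n : ℤ, F n = ∏ i, (a i * n + b i))
    (hdisc : (∏ i, a i) *
      ∏ i, ∏ j ∈ Finset.univ.filter (fun j => j ≠ i), (a i * b j - b i * a j) ≠ 0)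
    (hadm : ∀ p : ℕ, p.Prime → ∃ n : ℤ, ¬ ((p : ℤ) ∣ F n))
    (r : ℕ) (hr : 1 ≤ r) :
    ∃ (c : ℝ) (N₀ : ℕ), 0 < c ∧
      ∀ N : ℕ, N₀ ≤ N →
        ∀ A : Finset ℕ, A ⊆ SFset F N ((N : ℝ) ^ ((1 : ℝ) / (4 * k + 1))) →
          ∀ bb : ℕ, bb < primor (Real.log N / 3) →
            ∀ h : Fin r → ℤ,
              Function.Injective h →
              (∀ i, |h i| ≤ (N : ℤ) ^ (100 : ℕ)) →
              -- `h i − h j ∉ (S − S) ∩ ℤ`, where `S ⊆ ℚ` is the set of roots of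
              -- `G(X) = F(bb + MX) = ∏ i (a i (bb + MX) + b i)`:
              (∀ i j, i ≠ j → ∀ s s' : ℚ,
                (∏ u, ((a u : ℚ) * ((bb : ℚ) + (primor (Real.log N / 3) : ℚ) * s) + (b u : ℚ))) = 0 →
                (∏ u, ((a u : ℚ) * ((bb : ℚ) + (primor (Real.log N / 3) : ℚ) * s') + (b u : ℚ))) = 0 →
                ((h i - h j : ℤ) : ℚ) ≠ s - s') →
              (Set.ncard {x : ℤ | ∀ i : Fin r,
                  ∃ n ∈ Abset A N (primor (Real.log N / 3)) bb, x = (n : ℤ) + h i} : ℝ)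
                ≤ c * (Real.log (Real.log N / 3)) ^ (k * r) / (Real.log N) ^ (k * r) *
                    (N : ℝ) / (primor (Real.log N / 3) : ℝ) := by
  obtain rfl : F = fun n ↦ (linearFormsPoly a b).eval n :=
    funext fun n ↦ (hF n).trans (eval_linearFormsPoly a b n).symm
  have : NeZero k := ⟨(Nat.zero_lt_of_lt hk).ne'⟩
  have : NeZero r := ⟨(Nat.zero_lt_of_lt hr).ne'⟩
  obtain ⟨c, N₀, hc, hbound⟩ := stmt3_general (τ := Fin r) a b hdisc
    (θ := 1 / (4 * k + 1)) (by positivity) 100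
  simp only [Fintype.card_prod, Fintype.card_fin] at hbound
  exact ⟨c, max N₀ 1, hc, fun N hN A hA bb _ h _ ↦ hbound N (le_of_max_le_left hN) _ (primor_pos _)
    (primor_log_div_three_sq_le (le_of_max_le_right hN)) A hA bb h⟩
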